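/- arXiv:2310.14582 — 2 statements merged into one kernel-verified Lean document; each statement's English description precedes it below -/
import Mathlib

section
/- Let (A_i)_{i∈I} be unital subalgebras of A, (F_i)_{i∈I} subalgebras of F, and for each i ∈ I let B_i be the unital subalgebra of B generated by A_i ∪ F_i. If the family (A_i, F_i)_{i∈I} is B′-free in (A, φ, F, Φ), then the subalgebras (B_i)_{i∈I} are infinitesimally free with respect to (φ, φ′). -/
open scoped BigOperators

namespace TypeBPrime

variable {B : Type*} [Ring B] [Algebra ℂ B]

/-- The alternating word `a 0 * (f 0 * a 1) * ⋯ * (f (n-1) * a n)`. -/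
def altWord {n : ℕ} (a : Fin (n + 1) → B) (f : Fin n → B) : B :=
  a 0 * (List.ofFn fun k : Fin n => f k * a k.succ).prod

/-- Cyclic-antimonotone independence of the pair `(A₁, F₁)` with respect to `(φ, Φ)`:
`Φ(a₀ f₁ a₁ ⋯ fₙ aₙ) = φ(a₀ aₙ) · φ(a₁) ⋯ φ(a_{n-1}) · Φ(f₁ ⋯ fₙ)` for all `n ≥ 1`. -/
def CyclicAntimonotone (φ Φ : B → ℂ) (A₁ F₁ : Set B) : Prop :=
  ∀ n : ℕ, 0 < n → ∀ (a : Fin (n + 1) → B) (f : Fin n → B),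
    (∀ k, a k ∈ A₁) → (∀ k, f k ∈ F₁) →
    Φ (altWord a f) =
      φ (a 0 * a (Fin.last n)) *
        (∏ k ∈ Finset.Ioo (0 : Fin (n + 1)) (Fin.last n), φ (a k)) *
        Φ (List.ofFn f).prod

/-- Freeness of a family of subsets with respect to `φ`:
alternating words in centered elements are centered. -/
def IsFreeFamily {ι : Type*} (φ : B → ℂ) (Alg : ι → Set B) : Prop :=
  ∀ (n : ℕ) (idx : Fin (n + 1) → ι) (a : Fin (n + 1) → B),
    (∀ k : Fin n, idx k.castSucc ≠ idx k.succ) →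
    (∀ k, a k ∈ Alg (idx k)) → (∀ k, φ (a k) = 0) →
    φ (List.ofFn a).prod = 0

/-- Infinitesimal freeness of a family of subsets with respect to `(φ, φ')`. -/
def IsInfFree {ι : Type*} (φ φ' : B → ℂ) (Alg : ι → Set B) : Prop :=
  IsFreeFamily φ Alg ∧
  (∀ (n : ℕ) (idx : Fin (n + 1) → ι) (b : Fin (n + 1) → B),
    (∀ k : Fin n, idx k.castSucc ≠ idx k.succ) →
    (∀ k, b k ∈ Alg (idx k)) → (∀ k, φ (b k) = 0) →
    ¬(Even n ∧ ∀ k, idx k = idx k.rev) →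
    φ' (List.ofFn b).prod = 0) ∧
  (∀ (m : ℕ) (idx : Fin (2 * m + 1) → ι) (b : Fin (2 * m + 1) → B),
    (∀ k : Fin (2 * m), idx k.castSucc ≠ idx k.succ) →
    (∀ k, b k ∈ Alg (idx k)) → (∀ k, φ (b k) = 0) →
    (∀ k, idx k = idx k.rev) →
    φ' (List.ofFn b).prod =
      (∏ j : Fin m,
          φ (b (Fin.castLE (by omega) j) * b (Fin.castLE (by omega) j).rev)) *
        φ' (b ⟨m, by omega⟩))

/-- Trivial independence with respect to `Φ`: alternating words of length `≥ 2` vanish. -/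
def TrivIndep {ι : Type*} (Φ : B → ℂ) (Fj : ι → Set B) : Prop :=
  ∀ (n : ℕ) (idx : Fin (n + 2) → ι) (f : Fin (n + 2) → B),
    (∀ k : Fin (n + 1), idx k.castSucc ≠ idx k.succ) →
    (∀ k, f k ∈ Fj (idx k)) →
    Φ (List.ofFn f).prod = 0

/-- Boolean independence with respect to `ψ`. -/
def BoolIndep {ι : Type*} (ψ : B → ℂ) (C : ι → Set B) : Prop :=
  ∀ (n : ℕ) (idx : Fin (n + 1) → ι) (c : Fin (n + 1) → B),
    (∀ k : Fin n, idx k.castSucc ≠ idx k.succ) →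
    (∀ k, c k ∈ C (idx k)) →
    ψ (List.ofFn c).prod = ∏ k, ψ (c k)

/-- Conditional freeness with respect to `(φ, ψ)`. -/
def CFree {ι : Type*} (φ ψ : B → ℂ) (Alg : ι → Set B) : Prop :=
  IsFreeFamily φ Alg ∧
  ∀ (n : ℕ) (idx : Fin (n + 1) → ι) (b : Fin (n + 1) → B),
    (∀ k : Fin n, idx k.castSucc ≠ idx k.succ) →
    (∀ k, b k ∈ Alg (idx k)) → (∀ k, φ (b k) = 0) →
    ψ (List.ofFn b).prod = ∏ k, ψ (b k)

/-- The unital subspace `ℂ·1_B + F₁`. -/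
def unitize (F₁ : Set B) : Set B :=
  {x | ∃ c : ℂ, ∃ f ∈ F₁, x = algebraMap ℂ B c + f}

/-- The set of alternating words `a₀ f₁ a₁ ⋯ fₙ aₙ` with letters from `A₁` and `F₁`. -/
def wordSet (A₁ F₁ : Set B) : Set B :=
  {x | ∃ n : ℕ, 0 < n ∧ ∃ (a : Fin (n + 1) → B) (f : Fin n → B),
    (∀ k, a k ∈ A₁) ∧ (∀ k, f k ∈ F₁) ∧ x = altWord a f}

/-- `A₁⟨F₁⟩₀`: the linear span of all alternating words `a₀ f₁ a₁ ⋯ fₙ aₙ`. -/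
def wordSpan (A₁ F₁ : Set B) : Set B :=
  (Submodule.span ℂ (wordSet A₁ F₁) : Submodule ℂ B)

/-- The type B′ subalgebra `A₁⟨F₁⟩ = A₁ + A₁⟨F₁⟩₀`. -/
def typeBSub (A₁ F₁ : Set B) : Set B :=
  {x | ∃ a ∈ A₁, ∃ f ∈ wordSpan A₁ F₁, x = a + f}

/-- `(tₙ)` is the inverse Markov–Krein transform of the sequence `(mₙ)`:
`(n+1)·mₙ = Σ_{j=0}^{n} tⱼ m_{n−j}` for all `n ≥ 0`. -/
def IsInvMK (m t : ℕ → ℂ) : Prop :=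
  ∀ n : ℕ, ((n : ℂ) + 1) * m n = ∑ j ∈ Finset.range (n + 1), t j * m (n - j)

/-!
Call an element of the algebra `C` generated by all the `Aᵢ` and `Fᵢ` null if the two-sided ideal
of `C` it generates lies in the kernel of `φ'`. Modulo null elements, cyclic antimonotonicity says
`f a f' = φ(a) f f'`, and trivial independence says `f f' = 0` for `f ∈ Fᵢ`, `f' ∈ Fⱼ`, `i ≠ j`.
Hence every `b ∈ Bᵢ` is `a + g` with `a ∈ Aᵢ` and `g ∈ Aᵢ Fᵢ Aᵢ`, and by freeness `g w g' = 0`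
whenever `g` and `g'` are separated by an alternating centered word `w` of the `Aᵢ`. So an
alternating product is linear in the perturbations,
`∏ (aₖ + gₖ) = ∏ aₖ + ∑ a₁ ⋯ gₖ ⋯ aₙ`. Here `φ'` kills the first term, and takes the value
`φ(a₁ ⋯ aₖ₋₁ aₖ₊₁ ⋯ aₙ) φ'(gₖ)` on the `k`-th summand. By freeness this vanishes unless the two
words around `gₖ` mirror each other, when it factors into the covariances `φ(aⱼ aₙ₊₁₋ⱼ)`.
-/

section IndexedFamilies

variable {ι : Type*}

theorem isChain_ne_reverse {l : List ι} :
    l.reverse.IsChain (· ≠ ·) ↔ l.IsChain (· ≠ ·) := by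
  simp only [List.isChain_reverse, ne_comm]

section FreeWords

/-- The letters of the word `w` lie in the algebras named by their indices and are `φ`-centered.
A word is a list of pairs `(i, a)`, each standing for the letter `a` taken from `Alg i`. -/
def HasCenteredLetters (φ : B →ₗ[ℂ] ℂ) (Alg : ι → Subalgebra ℂ B) (w : List (ι × B)) : Prop :=
  ∀ p ∈ w, p.2 ∈ Alg p.1 ∧ φ p.2 = 0

variable {φ : B →ₗ[ℂ] ℂ} {Alg : ι → Subalgebra ℂ B}

theorem HasCenteredLetters.append {v w : List (ι × B)} (hv : HasCenteredLetters φ Alg v)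
    (hw : HasCenteredLetters φ Alg w) : HasCenteredLetters φ Alg (v ++ w) :=
  List.forall_mem_append.2 ⟨hv, hw⟩

theorem HasCenteredLetters.reverse {w : List (ι × B)} (hw : HasCenteredLetters φ Alg w) :
    HasCenteredLetters φ Alg w.reverse :=
  fun p hp => hw p (List.mem_reverse.1 hp)

theorem HasCenteredLetters.tail {p : ι × B} {w : List (ι × B)}
    (hw : HasCenteredLetters φ Alg (p :: w)) : HasCenteredLetters φ Alg w :=
  (List.forall_mem_cons.1 hw).2

theorem hasCenteredLetters_nil : HasCenteredLetters φ Alg [] :=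
  List.forall_mem_nil _

theorem hasCenteredLetters_sub_smul_one (hφ : φ 1 = 1) {i : ι} {x : B} (hx : x ∈ Alg i) :
    HasCenteredLetters φ Alg [(i, x - φ x • 1)] := by
  simpa [HasCenteredLetters, hφ] using sub_mem hx ((Alg i).smul_mem (one_mem _) (φ x))

theorem IsFreeFamily.apply_prod_eq_zero (h : IsFreeFamily φ fun i => (Alg i : Set B))
    {w : List (ι × B)} (hw : HasCenteredLetters φ Alg w)
    (hchain : (w.map Prod.fst).IsChain (· ≠ ·)) (hne : w ≠ []) :
    φ (w.map Prod.snd).prod = 0 := by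
  obtain ⟨n, u, rfl⟩ : ∃ n, ∃ u : Fin (n + 1) → ι × B, w = List.ofFn u := by
    obtain ⟨n, hn⟩ := Nat.exists_eq_add_one.2 (List.length_pos_iff.2 hne)
    exact ⟨n, fun k => w.get (k.cast hn.symm), by rw [← List.ofFn_congr hn, List.ofFn_get]⟩
  rw [HasCenteredLetters, List.forall_mem_ofFn_iff] at hw
  rw [List.map_ofFn] at hchain ⊢
  exact h n (fun k => (u k).1) (fun k => (u k).2) (fun k => List.isChain_ofFn.1 hchain k (by omega))
    (fun k => (hw k).1) fun k => (hw k).2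

theorem IsFreeFamily.apply_prod_mul_mul_prod (h : IsFreeFamily φ fun i => (Alg i : Set B))
    (hφ : φ 1 = 1) {P Q : List (ι × B)} (hP : HasCenteredLetters φ Alg P)
    (hQ : HasCenteredLetters φ Alg Q) {i : ι} {x : B} (hx : x ∈ Alg i)
    (hchain : (P.map Prod.fst ++ i :: Q.map Prod.fst).IsChain (· ≠ ·)) :
    φ ((P.map Prod.snd).prod * x * (Q.map Prod.snd).prod) =
      φ x * φ ((P.map Prod.snd).prod * (Q.map Prod.snd).prod) := by
  have hcentered := h.apply_prod_eq_zero
    (hP.append ((hasCenteredLetters_sub_smul_one hφ hx).append hQ)) (by simpa using hchain)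
    (by simp)
  rw [← sub_eq_zero, ← hcentered]
  simp [mul_sub, sub_mul, mul_assoc]

theorem IsFreeFamily.apply_mul_prod_eq_zero (h : IsFreeFamily φ fun i => (Alg i : Set B))
    (hφ : φ 1 = 1) {w : List (ι × B)} (hw : HasCenteredLetters φ Alg w) (hne : w ≠ []) {i : ι}
    {x : B} (hx : x ∈ Alg i) (hchain : (i :: w.map Prod.fst).IsChain (· ≠ ·)) :
    φ (x * (w.map Prod.snd).prod) = 0 := by
  have hsplit := h.apply_prod_mul_mul_prod hφ hasCenteredLetters_nil hw hx hchain
  simpa [h.apply_prod_eq_zero hw hchain.of_cons hne] using hsplit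

theorem IsFreeFamily.apply_mul_prod_mul_eq_zero (h : IsFreeFamily φ fun i => (Alg i : Set B))
    (hφ : φ 1 = 1) {w : List (ι × B)} (hw : HasCenteredLetters φ Alg w) (hne : w ≠ [])
    {i j : ι} {x y : B} (hx : x ∈ Alg i) (hy : y ∈ Alg j)
    (hchain : (i :: (w.map Prod.fst ++ [j])).IsChain (· ≠ ·)) :
    φ (x * (w.map Prod.snd).prod * y) = 0 := by
  have hcentered := h.apply_mul_prod_eq_zero hφ
    (hw.append (hasCenteredLetters_sub_smul_one hφ hy)) (by simp) hx (by simpa using hchain)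
  have hscalar := h.apply_mul_prod_eq_zero hφ hw hne hx
    (List.IsChain.left_of_append (l₁ := i :: w.map Prod.fst) hchain)
  simpa [mul_sub, ← mul_assoc, hscalar] using hcentered

theorem IsFreeFamily.apply_reverse_mul_cons_cons (h : IsFreeFamily φ fun i => (Alg i : Set B))
    (hφ : φ 1 = 1) {p q : ι × B} {P Q : List (ι × B)} (hP : HasCenteredLetters φ Alg (p :: P))
    (hQ : HasCenteredLetters φ Alg (q :: Q)) (hPc : ((p :: P).map Prod.fst).IsChain (· ≠ ·))
    (hQc : ((q :: Q).map Prod.fst).IsChain (· ≠ ·)) (hpq : p.1 = q.1) :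
    φ (((p :: P).reverse.map Prod.snd).prod * ((q :: Q).map Prod.snd).prod) =
      φ (p.2 * q.2) * φ ((P.reverse.map Prod.snd).prod * (Q.map Prod.snd).prod) := by
  have hchain : (P.reverse.map Prod.fst ++ p.1 :: Q.map Prod.fst).IsChain (· ≠ ·) := by
    rw [List.isChain_split]
    constructor
    · simpa using isChain_ne_reverse.2 hPc
    · simpa [hpq] using hQc
  have hmem : p.2 * q.2 ∈ Alg p.1 :=
    mul_mem (hP p List.mem_cons_self).1 (hpq ▸ (hQ q List.mem_cons_self).1)
  rw [← h.apply_prod_mul_mul_prod hφ hP.tail.reverse hQ.tail hmem hchain]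
  simp [mul_assoc]

theorem IsFreeFamily.apply_reverse_mul_eq_zero (h : IsFreeFamily φ fun i => (Alg i : Set B))
    (hφ : φ 1 = 1) {P Q : List (ι × B)} (hP : HasCenteredLetters φ Alg P)
    (hQ : HasCenteredLetters φ Alg Q) (hPc : (P.map Prod.fst).IsChain (· ≠ ·))
    (hQc : (Q.map Prod.fst).IsChain (· ≠ ·)) (hne : P.map Prod.fst ≠ Q.map Prod.fst) :
    φ ((P.reverse.map Prod.snd).prod * (Q.map Prod.snd).prod) = 0 := by
  induction P generalizing Q with
  | nil => simpa using h.apply_prod_eq_zero hQ hQc (by rintro rfl; exact hne rfl)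
  | cons p P ih =>
    cases Q with
    | nil =>
      have hchain := List.map_reverse ▸ isChain_ne_reverse.2 hPc
      simpa using h.apply_prod_eq_zero hP.reverse hchain (by simp)
    | cons q Q =>
      by_cases hpq : p.1 = q.1
      · rw [h.apply_reverse_mul_cons_cons hφ hP hQ hPc hQc hpq,
          ih hP.tail hQ.tail hPc.of_cons hQc.of_cons (by simpa [hpq] using hne),
          mul_zero]
      · have hchain : (((p :: P).reverse ++ q :: Q).map Prod.fst).IsChain (· ≠ ·) := by
          rw [List.map_append, List.map_reverse, List.isChain_append]
          exact ⟨isChain_ne_reverse.2 hPc, hQc, by simpa using hpq⟩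
        simpa [mul_assoc] using h.apply_prod_eq_zero (hP.reverse.append hQ) hchain (by simp)

theorem IsFreeFamily.apply_reverse_mul_of_map_fst_eq
    (h : IsFreeFamily φ fun i => (Alg i : Set B)) (hφ : φ 1 = 1) {P Q : List (ι × B)}
    (hP : HasCenteredLetters φ Alg P) (hQ : HasCenteredLetters φ Alg Q)
    (hPc : (P.map Prod.fst).IsChain (· ≠ ·)) (heq : P.map Prod.fst = Q.map Prod.fst) :
    φ ((P.reverse.map Prod.snd).prod * (Q.map Prod.snd).prod) =
      (List.zipWith (fun p q => φ (p.2 * q.2)) P Q).prod := by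
  induction P generalizing Q with
  | nil => simp_all
  | cons p P ih =>
    cases Q with
    | nil => simp at heq
    | cons q Q =>
      obtain ⟨hpq, hPQ⟩ := List.cons_eq_cons.1 heq
      rw [h.apply_reverse_mul_cons_cons hφ hP hQ hPc (heq ▸ hPc) hpq,
        ih hP.tail hQ.tail hPc.of_cons hPQ, List.zipWith_cons_cons, List.prod_cons]

end FreeWords

theorem TrivIndep.apply_prod_eq_zero {Φ : B → ℂ} {Fj : ι → NonUnitalSubalgebra ℂ B}
    (h : TrivIndep Φ fun j => (Fj j : Set B)) {w : List (ι × B)} (hw : ∀ p ∈ w, p.2 ∈ Fj p.1)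
    {i j : ι} (hi : i ∈ w.map Prod.fst) (hj : j ∈ w.map Prod.fst) (hij : i ≠ j) :
    Φ (w.map Prod.snd).prod = 0 := by
  induction hlen : w.length generalizing w with
  | zero => simp_all
  | succ n ih =>
    by_cases hchain : (w.map Prod.fst).IsChain (· ≠ ·)
    · obtain ⟨m, rfl⟩ : ∃ m, n = m + 1 := by
        refine Nat.exists_eq_add_one.2 (Nat.pos_of_ne_zero ?_)
        rintro rfl
        obtain ⟨p, rfl⟩ := List.length_eq_one_iff.1 hlen
        simp_all
      obtain ⟨u, rfl⟩ : ∃ u : Fin (m + 2) → ι × B, w = List.ofFn u :=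
        ⟨fun k => w.get (k.cast hlen.symm), by rw [← List.ofFn_congr hlen, List.ofFn_get]⟩
      rw [List.map_ofFn] at hchain ⊢
      exact h m (fun k => (u k).1) (fun k => (u k).2)
        (fun k => List.isChain_ofFn.1 hchain k (by omega)) (List.forall_mem_ofFn_iff.1 hw)
    · obtain ⟨v, p, q, v', rfl, hpq⟩ :
          ∃ v p q v', w = v ++ p :: q :: v' ∧ p.1 = q.1 := by
        rw [List.isChain_map, List.isChain_iff_forall_rel_of_append_cons_cons] at hchain
        push Not at hchain
        obtain ⟨p, q, v, v', hw, hpq⟩ := hchain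
        exact ⟨v, p, q, v', hw, hpq⟩
      have hmerged := ih (w := v ++ (p.1, p.2 * q.2) :: v') (by
        simp only [List.forall_mem_append, List.forall_mem_cons] at hw ⊢
        exact ⟨hw.1, mul_mem hw.2.1 (hpq ▸ hw.2.2.1), hw.2.2.2⟩)
        (by simpa [← hpq] using hi) (by simpa [← hpq] using hj)
        (by simp only [List.length_append, List.length_cons] at hlen ⊢; omega)
      simpa [mul_assoc] using hmerged

theorem CyclicAntimonotone.apply_mul_prod {φ Φ : B →ₗ[ℂ] ℂ} {A₁ F₁ : Set B}
    (h : CyclicAntimonotone φ Φ A₁ F₁) {x : B} (hx : x ∈ A₁) {w : List (B × B)}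
    (hw : ∀ q ∈ w, q.1 ∈ F₁ ∧ q.2 ∈ A₁) (hne : w ≠ []) :
    Φ (x * (w.map fun q => q.1 * q.2).prod) =
      φ (x * (w.getLast hne).2) * (w.dropLast.map fun q => φ q.2).prod *
        Φ (w.map Prod.fst).prod := by
  obtain ⟨n, u, rfl⟩ : ∃ n, ∃ u : Fin (n + 1) → B × B, w = List.ofFn u := by
    obtain ⟨n, hn⟩ := Nat.exists_eq_add_one.2 (List.length_pos_iff.2 hne)
    exact ⟨n, fun k => w.get (k.cast hn.symm), by rw [← List.ofFn_congr hn, List.ofFn_get]⟩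
  rw [List.forall_mem_ofFn_iff] at hw
  have key := h (n + 1) n.succ_pos (Fin.cons x fun k => (u k).2) (fun k => (u k).1)
    (Fin.cases hx fun k => (hw k).2) fun k => (hw k).1
  have hinner : ∏ k ∈ Finset.Ioo 0 (Fin.last (n + 1)),
      φ ((Fin.cons x fun k => (u k).2 : Fin (n + 2) → B) k) = ∏ k : Fin n, φ (u k.castSucc).2 := by
    rw [← Fin.castSucc_zero, ← Fin.map_castSuccEmb_Ioi, Finset.prod_map, Fin.prod_Ioi_zero]
    simp
  have hdrop : (List.ofFn u).dropLast = List.ofFn fun k : Fin n => u k.castSucc := by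
    rw [List.ofFn_succ', List.concat_eq_append, List.dropLast_concat]
  rw [altWord, hinner] at key
  rw [List.getLast_ofFn_succ, hdrop]
  simp only [List.map_ofFn, List.prod_ofFn]
  exact key

section NullIdeal

/-- The largest two-sided ideal of the algebra `C` on which the functional `ψ` vanishes, as a
subspace of `B`. Computing `ψ` on `C` modulo this ideal loses nothing. -/
def nullIdeal (ψ : B →ₗ[ℂ] ℂ) (C : Subalgebra ℂ B) : Submodule ℂ B where
  carrier := {n | n ∈ C ∧ ∀ c ∈ C, ∀ d ∈ C, ψ (c * n * d) = 0}
  zero_mem' := ⟨zero_mem C, by simp⟩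
  add_mem' hm hn := ⟨add_mem hm.1 hn.1, fun c hc d hd => by
    rw [mul_add, add_mul, map_add, hm.2 c hc d hd, hn.2 c hc d hd, add_zero]⟩
  smul_mem' r n hn := ⟨C.smul_mem hn.1 r, fun c hc d hd => by
    rw [mul_smul_comm, smul_mul_assoc, map_smul, hn.2 c hc d hd, smul_zero]⟩

variable {ψ : B →ₗ[ℂ] ℂ} {C : Subalgebra ℂ B}

theorem nullIdeal_le : nullIdeal ψ C ≤ Subalgebra.toSubmodule C :=
  fun _ hn => hn.1

theorem apply_eq_zero_of_mem_nullIdeal {n : B} (hn : n ∈ nullIdeal ψ C) : ψ n = 0 := by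
  simpa using hn.2 1 (one_mem C) 1 (one_mem C)

theorem apply_eq_of_sub_mem_nullIdeal {x y : B} (h : x - y ∈ nullIdeal ψ C) : ψ x = ψ y :=
  sub_eq_zero.1 <| map_sub ψ x y ▸ apply_eq_zero_of_mem_nullIdeal h

theorem mul_mem_nullIdeal_left {c n : B} (hc : c ∈ C) (hn : n ∈ nullIdeal ψ C) :
    c * n ∈ nullIdeal ψ C :=
  ⟨mul_mem hc hn.1, fun x hx y hy => by simpa [mul_assoc] using hn.2 _ (mul_mem hx hc) y hy⟩

theorem mul_mem_nullIdeal_right {n d : B} (hn : n ∈ nullIdeal ψ C) (hd : d ∈ C) :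
    n * d ∈ nullIdeal ψ C :=
  ⟨mul_mem hn.1 hd, fun x hx y hy => by simpa [mul_assoc] using hn.2 x hx _ (mul_mem hd hy)⟩

theorem prod_sub_prod_mem_nullIdeal {κ : Type*} {a b : κ → B} {L : List κ}
    (ha : ∀ k ∈ L, a k ∈ C) (hb : ∀ k ∈ L, b k ∈ C) (hab : ∀ k ∈ L, b k - a k ∈ nullIdeal ψ C) :
    (L.map b).prod - (L.map a).prod ∈ nullIdeal ψ C := by
  induction L with
  | nil => simp
  | cons k L ih =>
    rw [List.forall_mem_cons] at ha hb hab
    have hL : (L.map b).prod ∈ C := list_prod_mem (List.forall_mem_map.2 hb.2)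
    have htelescope : ((k :: L).map b).prod - ((k :: L).map a).prod =
        (b k - a k) * (L.map b).prod + a k * ((L.map b).prod - (L.map a).prod) := by
      simp only [List.map_cons, List.prod_cons]
      noncomm_ring
    rw [htelescope]
    exact add_mem (mul_mem_nullIdeal_right hab.1 hL)
      (mul_mem_nullIdeal_left ha.1 (ih ha.2 hb.2 hab.2))

variable {A₁ : Subalgebra ℂ B} {F₁ : Set B}

theorem apply_eq_zero_of_mem_adjoin_union
    (h : ∀ x ∈ A₁, ∀ w : List (B × B), (∀ q ∈ w, q.1 ∈ F₁ ∧ q.2 ∈ A₁) →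
      ψ (x * (w.map fun q => q.1 * q.2).prod) = 0)
    {c : B} (hc : c ∈ Algebra.adjoin ℂ ((A₁ : Set B) ∪ F₁)) : ψ c = 0 := by
  suffices hword : ∀ c ∈ Submonoid.closure ((A₁ : Set B) ∪ F₁), ∃ x ∈ A₁, ∃ w : List (B × B),
      (∀ q ∈ w, q.1 ∈ F₁ ∧ q.2 ∈ A₁) ∧ c = x * (w.map fun q => q.1 * q.2).prod by
    rw [← Subalgebra.mem_toSubmodule, Algebra.adjoin_eq_span] at hc
    refine Submodule.span_le (p := LinearMap.ker ψ).2 (fun c hc => ?_) hc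
    obtain ⟨x, hx, w, hw, rfl⟩ := hword c hc
    exact h x hx w hw
  intro c hc
  induction hc using Submonoid.closure_induction_left with
  | one => exact ⟨1, one_mem _, [], by simp, by simp⟩
  | mul_left s hs c _ ih =>
    obtain ⟨x, hx, w, hw, rfl⟩ := ih
    obtain hs | hs := hs
    · exact ⟨s * x, mul_mem hs hx, w, hw, by rw [mul_assoc]⟩
    · exact ⟨1, one_mem _, (s, x) :: w, List.forall_mem_cons.2 ⟨⟨hs, hx⟩, hw⟩,
        by simp [mul_assoc]⟩

theorem mem_nullIdeal_adjoin_union {n : B} (hn : n ∈ Algebra.adjoin ℂ ((A₁ : Set B) ∪ F₁))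
    (h : ∀ x ∈ A₁, ∀ y ∈ A₁, ∀ v w : List (B × B), (∀ q ∈ v, q.1 ∈ F₁ ∧ q.2 ∈ A₁) →
      (∀ q ∈ w, q.1 ∈ F₁ ∧ q.2 ∈ A₁) →
      ψ (x * (v.map fun q => q.1 * q.2).prod * n * (y * (w.map fun q => q.1 * q.2).prod)) = 0) :
    n ∈ nullIdeal ψ (Algebra.adjoin ℂ ((A₁ : Set B) ∪ F₁)) := by
  refine ⟨hn, fun c hc d hd => ?_⟩
  refine apply_eq_zero_of_mem_adjoin_union (ψ := ψ ∘ₗ LinearMap.mulLeft ℂ (c * n))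
    (fun y hy w hw => ?_) hd
  rw [LinearMap.comp_apply, LinearMap.mulLeft_apply, mul_assoc c]
  refine apply_eq_zero_of_mem_adjoin_union
    (ψ := ψ ∘ₗ LinearMap.mulRight ℂ (n * (y * (w.map fun q => q.1 * q.2).prod)))
    (fun x hx v hv => ?_) hc
  rw [LinearMap.comp_apply, LinearMap.mulRight_apply, ← mul_assoc]
  exact h x hx y hy v w hv hw

end NullIdeal

section CyclicAntimonotone

variable {φ φ' : B →ₗ[ℂ] ℂ} {A₁ : Subalgebra ℂ B} {F₁ : Set B}

theorem CyclicAntimonotone.apply_mul_mul (h : CyclicAntimonotone φ φ' A₁ F₁) {x y f : B}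
    (hx : x ∈ A₁) (hy : y ∈ A₁) (hf : f ∈ F₁) : φ' (x * f * y) = φ (x * y) * φ' f := by
  simpa [mul_assoc] using
    h.apply_mul_prod hx (w := [(f, y)]) (by simpa using ⟨hf, hy⟩) (by simp)

theorem CyclicAntimonotone.apply_word_mul_mul_mul_word (h : CyclicAntimonotone φ φ' A₁ F₁)
    {x y a f f' : B} (hx : x ∈ A₁) (hy : y ∈ A₁) (ha : a ∈ A₁) (hf : f ∈ F₁) (hf' : f' ∈ F₁)
    {v w : List (B × B)} (hv : ∀ q ∈ v, q.1 ∈ F₁ ∧ q.2 ∈ A₁)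
    (hw : ∀ q ∈ w, q.1 ∈ F₁ ∧ q.2 ∈ A₁) :
    φ' (x * (v.map fun q => q.1 * q.2).prod * (f * a * f') *
        (y * (w.map fun q => q.1 * q.2).prod)) =
      φ (x * (((f', y) :: w).getLast (List.cons_ne_nil _ _)).2) *
        ((v.map fun q => φ q.2).prod *
          (φ a * (((f', y) :: w).dropLast.map fun q => φ q.2).prod)) *
        φ' ((v.map Prod.fst).prod * (f * f') * (w.map Prod.fst).prod) := by
  have hletters : ∀ q ∈ v ++ (f, a) :: (f', y) :: w, q.1 ∈ F₁ ∧ q.2 ∈ A₁ := by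
    simp only [List.forall_mem_append, List.forall_mem_cons]
    exact ⟨hv, ⟨hf, ha⟩, ⟨hf', hy⟩, hw⟩
  simpa [mul_assoc] using h.apply_mul_prod hx hletters (by simp)

theorem CyclicAntimonotone.mul_mul_sub_smul_mem_nullIdeal (h : CyclicAntimonotone φ φ' A₁ F₁)
    (hφ : φ 1 = 1) {a f f' : B} (ha : a ∈ A₁) (hf : f ∈ F₁) (hf' : f' ∈ F₁) :
    f * a * f' - φ a • (f * f') ∈ nullIdeal φ' (Algebra.adjoin ℂ ((A₁ : Set B) ∪ F₁)) := by
  have hA : ∀ a ∈ A₁, a ∈ Algebra.adjoin ℂ ((A₁ : Set B) ∪ F₁) :=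
    fun a ha => Algebra.subset_adjoin (Or.inl ha)
  have hF : ∀ f ∈ F₁, f ∈ Algebra.adjoin ℂ ((A₁ : Set B) ∪ F₁) :=
    fun f hf => Algebra.subset_adjoin (Or.inr hf)
  refine mem_nullIdeal_adjoin_union (sub_mem (mul_mem (mul_mem (hF f hf) (hA a ha)) (hF f' hf'))
    (Subalgebra.smul_mem _ (mul_mem (hF f hf) (hF f' hf')) _)) fun x hx y hy v w hv hw => ?_
  have hword := h.apply_word_mul_mul_mul_word hx hy (one_mem A₁) hf hf' hv hw
  rw [mul_one, hφ] at hword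
  rw [mul_sub, sub_mul, map_sub, mul_smul_comm, smul_mul_assoc, map_smul, hword,
    h.apply_word_mul_mul_mul_word hx hy ha hf hf' hv hw, smul_eq_mul]
  ring

theorem CyclicAntimonotone.mul_mem_nullIdeal (h : CyclicAntimonotone φ φ' A₁ F₁)
    {f f' : B} (hf : f ∈ F₁) (hf' : f' ∈ F₁)
    (hzero : ∀ v w : List B, (∀ g ∈ v, g ∈ F₁) → (∀ g ∈ w, g ∈ F₁) →
      φ' (v.prod * (f * f') * w.prod) = 0) :
    f * f' ∈ nullIdeal φ' (Algebra.adjoin ℂ ((A₁ : Set B) ∪ F₁)) := by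
  have hF : ∀ f ∈ F₁, f ∈ Algebra.adjoin ℂ ((A₁ : Set B) ∪ F₁) :=
    fun f hf => Algebra.subset_adjoin (Or.inr hf)
  refine mem_nullIdeal_adjoin_union (mul_mem (hF f hf) (hF f' hf')) fun x hx y hy v w hv hw => ?_
  have hword := h.apply_word_mul_mul_mul_word hx hy (one_mem A₁) hf hf' hv hw
  rwa [hzero _ _ (List.forall_mem_map.2 fun q hq => (hv q hq).1)
    (List.forall_mem_map.2 fun q hq => (hw q hq).1), mul_zero, mul_one] at hword

end CyclicAntimonotone

section Decomposition

theorem mul_mul_le_iff {P Q R S : Submodule ℂ B} :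
    P * Q * R ≤ S ↔ ∀ p ∈ P, ∀ q ∈ Q, ∀ r ∈ R, p * q * r ∈ S := by
  rw [Submodule.mul_le]
  refine ⟨fun h p hp q hq r hr => h _ (Submodule.mul_mem_mul hp hq) r hr, fun h m hm r hr => ?_⟩
  have hPQ : P * Q ≤ S.comap (LinearMap.mulRight ℂ r) :=
    Submodule.mul_le.2 fun p hp q hq => h p hp q hq r hr
  exact hPQ hm

theorem adjoin_union_le_sup {A : Subalgebra ℂ B} {F N : Submodule ℂ B}
    (hAN : Subalgebra.toSubmodule A * N ≤ N) (hNA : N * Subalgebra.toSubmodule A ≤ N)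
    (hFN : F * N ≤ N) (hFAF : F * Subalgebra.toSubmodule A * F ≤ F ⊔ N) :
    Subalgebra.toSubmodule (Algebra.adjoin ℂ ((A : Set B) ∪ F)) ≤
      Subalgebra.toSubmodule A ⊔
        (Subalgebra.toSubmodule A * F * Subalgebra.toSubmodule A ⊔ N) := by
  set S := Subalgebra.toSubmodule A
  have hSS : S * S = S := Subalgebra.isIdempotentElem_toSubmodule A
  have hFS : F * S ≤ S * F * S := by
    rw [mul_assoc]
    exact le_mul_of_one_le_left' (Submodule.one_le.2 (one_mem A))
  have hSmul : S * (S ⊔ (S * F * S ⊔ N)) ≤ S ⊔ (S * F * S ⊔ N) := by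
    rw [Submodule.mul_sup, Submodule.mul_sup, ← mul_assoc, ← mul_assoc, hSS]
    exact sup_le_sup le_rfl (sup_le_sup le_rfl hAN)
  have hFmul : F * (S ⊔ (S * F * S ⊔ N)) ≤ S ⊔ (S * F * S ⊔ N) := by
    rw [Submodule.mul_sup, Submodule.mul_sup, ← mul_assoc, ← mul_assoc]
    refine le_sup_of_le_right (sup_le (le_sup_of_le_left hFS) (sup_le ?_ (le_sup_of_le_right hFN)))
    calc F * S * F * S ≤ (F ⊔ N) * S := mul_le_mul' hFAF le_rfl
      _ ≤ S * F * S ⊔ N := Submodule.sup_mul F N S ▸ sup_le_sup hFS hNA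
  suffices h : ∀ b ∈ Algebra.adjoin ℂ ((A : Set B) ∪ F), ∀ s ∈ S ⊔ (S * F * S ⊔ N),
      b * s ∈ S ⊔ (S * F * S ⊔ N) from
    fun b hb => mul_one b ▸ h b hb 1 (Submodule.mem_sup_left (one_mem A))
  intro b hb
  induction hb using Algebra.adjoin_induction with
  | mem b hb =>
    rcases hb with hb | hb
    · exact fun s hs => hSmul (Submodule.mul_mem_mul hb hs)
    · exact fun s hs => hFmul (Submodule.mul_mem_mul hb hs)
  | algebraMap r => exact fun s hs => Algebra.smul_def r s ▸ Submodule.smul_mem _ r hs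
  | add b c _ _ ihb ihc => exact fun s hs => add_mul b c s ▸ add_mem (ihb s hs) (ihc s hs)
  | mul b c _ _ ihb ihc => exact fun s hs => (mul_assoc b c s).symm ▸ ihb _ (ihc s hs)

end Decomposition

/-- `B′`-freeness of the family `(Aᵢ, Fᵢ)`, expressed through `φ'` instead of `Φ` and through the
consequences of the splitting `B = A ⊕ F` for the given subalgebras: `φ` vanishes on the ideal
generated by the `Fᵢ`, and `φ'` vanishes on the algebra generated by the `Aᵢ`. Cyclic
antimonotonicity is only required for letters taken from the `Fᵢ` themselves. -/
structure IsBPrimeFree (φ φ' : B →ₗ[ℂ] ℂ) (Ai : ι → Subalgebra ℂ B)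
    (Fi : ι → NonUnitalSubalgebra ℂ B) : Prop where
  map_one : φ 1 = 1
  map_mul_mul_eq_zero : ∀ i, ∀ f ∈ Fi i, ∀ x y, φ (x * f * y) = 0
  map_eq_zero : ∀ a ∈ ⨆ i, Ai i, φ' a = 0
  isFreeFamily : IsFreeFamily φ fun i => (Ai i : Set B)
  cyclicAntimonotone :
    CyclicAntimonotone φ φ' (⨆ i, Ai i : Subalgebra ℂ B) (⋃ i, (Fi i : Set B))
  trivIndep : TrivIndep φ' fun i => (Fi i : Set B)

/-- The unital algebra generated by all the `Aᵢ` and `Fᵢ`. -/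
def totalAlgebra (Ai : ι → Subalgebra ℂ B) (Fi : ι → NonUnitalSubalgebra ℂ B) :
    Subalgebra ℂ B :=
  Algebra.adjoin ℂ (((⨆ i, Ai i : Subalgebra ℂ B) : Set B) ∪ ⋃ i, (Fi i : Set B))

/-- The null elements of the total algebra for both `φ` and `φ'`: computations of either functional
may be carried out modulo this ideal. -/
def commonNullIdeal (φ φ' : B →ₗ[ℂ] ℂ) (Ai : ι → Subalgebra ℂ B)
    (Fi : ι → NonUnitalSubalgebra ℂ B) : Submodule ℂ B :=
  nullIdeal φ (totalAlgebra Ai Fi) ⊓ nullIdeal φ' (totalAlgebra Ai Fi)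

/-- The space `Aᵢ Fᵢ Aᵢ` enlarged by the common null ideal, so that every element of the algebra
generated by `Aᵢ` and `Fᵢ` is the sum of an element of `Aᵢ` and a perturbation. -/
def perturbation (φ φ' : B →ₗ[ℂ] ℂ) (Ai : ι → Subalgebra ℂ B)
    (Fi : ι → NonUnitalSubalgebra ℂ B) (i : ι) : Submodule ℂ B :=
  Subalgebra.toSubmodule (Ai i) * (Fi i).toSubmodule * Subalgebra.toSubmodule (Ai i) ⊔
    commonNullIdeal φ φ' Ai Fi

section Perturbation

variable {φ φ' : B →ₗ[ℂ] ℂ} {Ai : ι → Subalgebra ℂ B} {Fi : ι → NonUnitalSubalgebra ℂ B}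

theorem mem_totalAlgebra_of_mem_iSup {a : B} (ha : a ∈ ⨆ i, Ai i) : a ∈ totalAlgebra Ai Fi :=
  Algebra.subset_adjoin (Or.inl ha)

theorem mem_iSup_of_mem {i : ι} {a : B} (ha : a ∈ Ai i) : a ∈ ⨆ i, Ai i :=
  le_iSup Ai i ha

theorem mem_totalAlgebra_left {i : ι} {a : B} (ha : a ∈ Ai i) : a ∈ totalAlgebra Ai Fi :=
  mem_totalAlgebra_of_mem_iSup (mem_iSup_of_mem ha)

theorem mem_totalAlgebra_right {i : ι} {f : B} (hf : f ∈ Fi i) : f ∈ totalAlgebra Ai Fi :=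
  Algebra.subset_adjoin (Or.inr (Set.mem_iUnion_of_mem i hf))

theorem HasCenteredLetters.prod_mem_iSup {w : List (ι × B)} (hw : HasCenteredLetters φ Ai w) :
    (w.map Prod.snd).prod ∈ ⨆ i, Ai i :=
  list_prod_mem (List.forall_mem_map.2 fun p hp => mem_iSup_of_mem (hw p hp).1)

theorem mul_mem_commonNullIdeal_left {c n : B} (hc : c ∈ totalAlgebra Ai Fi)
    (hn : n ∈ commonNullIdeal φ φ' Ai Fi) : c * n ∈ commonNullIdeal φ φ' Ai Fi :=
  ⟨mul_mem_nullIdeal_left hc hn.1, mul_mem_nullIdeal_left hc hn.2⟩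

theorem mul_mem_commonNullIdeal_right {c n : B} (hn : n ∈ commonNullIdeal φ φ' Ai Fi)
    (hc : c ∈ totalAlgebra Ai Fi) : n * c ∈ commonNullIdeal φ φ' Ai Fi :=
  ⟨mul_mem_nullIdeal_right hn.1 hc, mul_mem_nullIdeal_right hn.2 hc⟩

theorem perturbation_le {S : Submodule ℂ B} {i : ι}
    (hAFA : ∀ a ∈ Ai i, ∀ f ∈ Fi i, ∀ a' ∈ Ai i, a * f * a' ∈ S)
    (hN : commonNullIdeal φ φ' Ai Fi ≤ S) : perturbation φ φ' Ai Fi i ≤ S :=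
  sup_le (mul_mul_le_iff.2 hAFA) hN

theorem exists_map_snd_eq {E : Type*} {S : ι → Set E} {w : List E} (hw : ∀ g ∈ w, g ∈ ⋃ i, S i) :
    ∃ v : List (ι × E), (∀ p ∈ v, p.2 ∈ S p.1) ∧ v.map Prod.snd = w := by
  choose i hi using fun g : {g // g ∈ w} => Set.mem_iUnion.1 (hw g.1 g.2)
  refine ⟨w.attach.map fun g => (i g, g.1), ?_, by simp⟩
  rw [List.forall_mem_map]
  exact fun g _ => hi g

namespace IsBPrimeFree

theorem mem_nullIdeal_of_mem (h : IsBPrimeFree φ φ' Ai Fi) {i : ι} {f : B} (hf : f ∈ Fi i) :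
    f ∈ nullIdeal φ (totalAlgebra Ai Fi) :=
  ⟨mem_totalAlgebra_right hf, fun c _ d _ => h.map_mul_mul_eq_zero i f hf c d⟩

theorem perturbation_le_nullIdeal (h : IsBPrimeFree φ φ' Ai Fi) (i : ι) :
    perturbation φ φ' Ai Fi i ≤ nullIdeal φ (totalAlgebra Ai Fi) :=
  perturbation_le (fun _ ha _ hf _ ha' => mul_mem_nullIdeal_right
    (mul_mem_nullIdeal_left (mem_totalAlgebra_left ha) (h.mem_nullIdeal_of_mem hf))
    (mem_totalAlgebra_left ha')) inf_le_left

theorem mul_mul_sub_smul_mem_commonNullIdeal (h : IsBPrimeFree φ φ' Ai Fi) {i j : ι}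
    {f a f' : B} (hf : f ∈ Fi i) (ha : a ∈ ⨆ i, Ai i) (hf' : f' ∈ Fi j) :
    f * a * f' - φ a • (f * f') ∈ commonNullIdeal φ φ' Ai Fi := by
  refine ⟨sub_mem ?_ (Submodule.smul_mem _ _ ?_),
    h.cyclicAntimonotone.mul_mul_sub_smul_mem_nullIdeal h.map_one ha
      (Set.mem_iUnion_of_mem i hf) (Set.mem_iUnion_of_mem j hf')⟩
  · exact mul_mem_nullIdeal_left
      (mul_mem (mem_totalAlgebra_right hf) (mem_totalAlgebra_of_mem_iSup ha))
      (h.mem_nullIdeal_of_mem hf')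
  · exact mul_mem_nullIdeal_left (mem_totalAlgebra_right hf) (h.mem_nullIdeal_of_mem hf')

theorem exists_sub_mem_perturbation (h : IsBPrimeFree φ φ' Ai Fi) {i : ι} {b : B}
    (hb : b ∈ Algebra.adjoin ℂ ((Ai i : Set B) ∪ Fi i)) :
    ∃ a ∈ Ai i, b - a ∈ perturbation φ φ' Ai Fi i := by
  have hdec := adjoin_union_le_sup (A := Ai i) (F := (Fi i).toSubmodule)
    (N := commonNullIdeal φ φ' Ai Fi)
    (Submodule.mul_le.2 fun _ ha _ hn => mul_mem_commonNullIdeal_left (mem_totalAlgebra_left ha) hn)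
    (Submodule.mul_le.2 fun _ hn _ ha =>
      mul_mem_commonNullIdeal_right hn (mem_totalAlgebra_left ha))
    (Submodule.mul_le.2 fun _ hf _ hn =>
      mul_mem_commonNullIdeal_left (mem_totalAlgebra_right hf) hn)
    (mul_mul_le_iff.2 fun f hf a ha f' hf' => by
      rw [← add_sub_cancel (φ a • (f * f')) (f * a * f')]
      exact Submodule.add_mem_sup (Submodule.smul_mem _ (φ a) (mul_mem hf hf' : f * f' ∈ Fi i))
        (h.mul_mul_sub_smul_mem_commonNullIdeal hf (mem_iSup_of_mem ha) hf'))
  obtain ⟨a, ha, g, hg, rfl⟩ := Submodule.mem_sup.1 (hdec hb)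
  exact ⟨a, ha, by rwa [add_sub_cancel_left]⟩

theorem mul_mem_nullIdeal_of_ne (h : IsBPrimeFree φ φ' Ai Fi) {i j : ι} (hij : i ≠ j)
    {f f' : B} (hf : f ∈ Fi i) (hf' : f' ∈ Fi j) :
    f * f' ∈ nullIdeal φ' (totalAlgebra Ai Fi) := by
  refine h.cyclicAntimonotone.mul_mem_nullIdeal (Set.mem_iUnion_of_mem i hf)
    (Set.mem_iUnion_of_mem j hf') fun v w hv hw => ?_
  obtain ⟨v, hvF, rfl⟩ := exists_map_snd_eq hv
  obtain ⟨w, hwF, rfl⟩ := exists_map_snd_eq hw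
  have hletters : ∀ p ∈ v ++ (i, f) :: (j, f') :: w, p.2 ∈ Fi p.1 := by
    simp only [List.forall_mem_append, List.forall_mem_cons]
    exact ⟨hvF, hf, hf', hwF⟩
  simpa [mul_assoc] using h.trivIndep.apply_prod_eq_zero hletters
    (i := i) (j := j) (by simp) (by simp) hij

theorem mul_prod_mul_mem_nullIdeal (h : IsBPrimeFree φ φ' Ai Fi) {i j : ι} {w : List (ι × B)}
    (hw : HasCenteredLetters φ Ai w) (hchain : (i :: (w.map Prod.fst ++ [j])).IsChain (· ≠ ·))
    {f x y f' : B} (hf : f ∈ Fi i) (hx : x ∈ Ai i) (hy : y ∈ Ai j) (hf' : f' ∈ Fi j) :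
    f * (x * (w.map Prod.snd).prod * y) * f' ∈ nullIdeal φ' (totalAlgebra Ai Fi) := by
  have hreduce := (h.mul_mul_sub_smul_mem_commonNullIdeal hf
    (mul_mem (mul_mem (mem_iSup_of_mem hx) hw.prod_mem_iSup) (mem_iSup_of_mem hy)) hf').2
  refine (Submodule.sub_mem_iff_left _ ?_).1 hreduce
  rcases eq_or_ne w [] with rfl | hne
  · exact Submodule.smul_mem _ _ (h.mul_mem_nullIdeal_of_ne (by simpa using hchain) hf hf')
  · rw [h.isFreeFamily.apply_mul_prod_mul_eq_zero h.map_one hw hne hx hy hchain, zero_smul]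
    exact zero_mem _

theorem mul_prod_mul_mem_nullIdeal_of_mem_perturbation (h : IsBPrimeFree φ φ' Ai Fi) {i j : ι}
    {w : List (ι × B)} (hw : HasCenteredLetters φ Ai w)
    (hchain : (i :: (w.map Prod.fst ++ [j])).IsChain (· ≠ ·)) {g g' : B}
    (hg : g ∈ perturbation φ φ' Ai Fi i) (hg' : g' ∈ perturbation φ φ' Ai Fi j) :
    g * (w.map Prod.snd).prod * g' ∈ nullIdeal φ' (totalAlgebra Ai Fi) := by
  set m := (w.map Prod.snd).prod
  have hm : m ∈ totalAlgebra Ai Fi := mem_totalAlgebra_of_mem_iSup hw.prod_mem_iSup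
  have hword : ∀ a ∈ Ai i, ∀ f ∈ Fi i, ∀ x ∈ Ai i, perturbation φ φ' Ai Fi j ≤
      (nullIdeal φ' (totalAlgebra Ai Fi)).comap (LinearMap.mulLeft ℂ (a * f * x * m)) := by
    refine fun a ha f hf x hx => perturbation_le (fun y hy f' hf' a' ha' => ?_) fun n hn => ?_
    · simpa [mul_assoc] using mul_mem_nullIdeal_left (mem_totalAlgebra_left ha)
        (mul_mem_nullIdeal_right (h.mul_prod_mul_mem_nullIdeal hw hchain hf hx hy hf')
          (mem_totalAlgebra_left ha'))
    · exact mul_mem_nullIdeal_left (mul_mem (mul_mem (mul_mem (mem_totalAlgebra_left ha)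
        (mem_totalAlgebra_right hf)) (mem_totalAlgebra_left hx)) hm) hn.2
  have hmg' : m * g' ∈ totalAlgebra Ai Fi := mul_mem hm (h.perturbation_le_nullIdeal j hg').1
  have hleft : perturbation φ φ' Ai Fi i ≤
      (nullIdeal φ' (totalAlgebra Ai Fi)).comap (LinearMap.mulRight ℂ (m * g')) :=
    perturbation_le (fun a ha f hf x hx => by simpa [mul_assoc] using hword a ha f hf x hx hg')
      fun n hn => mul_mem_nullIdeal_right hn.2 hmg'
  simpa [mul_assoc] using hleft hg

theorem apply_mul_perturbation_mul (h : IsBPrimeFree φ φ' Ai Fi) {i : ι} {P Q : List (ι × B)}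
    (hP : HasCenteredLetters φ Ai P) (hQ : HasCenteredLetters φ Ai Q)
    (hchain : (P.map Prod.fst ++ i :: Q.map Prod.fst).IsChain (· ≠ ·)) {g : B}
    (hg : g ∈ perturbation φ φ' Ai Fi i) :
    φ' ((P.map Prod.snd).prod * g * (Q.map Prod.snd).prod) =
      φ ((P.map Prod.snd).prod * (Q.map Prod.snd).prod) * φ' g := by
  set p := (P.map Prod.snd).prod
  set q := (Q.map Prod.snd).prod
  have hp : p ∈ ⨆ i, Ai i := hP.prod_mem_iSup
  have hq : q ∈ ⨆ i, Ai i := hQ.prod_mem_iSup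
  suffices heq : perturbation φ φ' Ai Fi i ≤
      LinearMap.eqLocus (φ' ∘ₗ LinearMap.mulRight ℂ q ∘ₗ LinearMap.mulLeft ℂ p)
        (φ (p * q) • φ') from heq hg
  refine perturbation_le (fun a ha f hf a' ha' => ?_) fun n hn => ?_
  · have ha₁ := mem_iSup_of_mem ha
    have ha₁' := mem_iSup_of_mem ha'
    have hf₁ := Set.mem_iUnion_of_mem (s := fun i => (Fi i : Set B)) i hf
    calc φ' (p * (a * f * a') * q) = φ' (p * a * f * (a' * q)) := by simp only [mul_assoc]
      _ = φ (p * (a * a') * q) * φ' f := by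
        rw [h.cyclicAntimonotone.apply_mul_mul (mul_mem hp ha₁) (mul_mem ha₁' hq) hf₁]
        simp only [mul_assoc]
      _ = φ (p * q) * (φ (a * a') * φ' f) := by
        rw [h.isFreeFamily.apply_prod_mul_mul_prod h.map_one hP hQ (mul_mem ha ha') hchain]
        ring
      _ = φ (p * q) * φ' (a * f * a') := by
        rw [h.cyclicAntimonotone.apply_mul_mul ha₁ ha₁' hf₁]
  · have hpnq := mul_mem_nullIdeal_right (mul_mem_nullIdeal_left
      (mem_totalAlgebra_of_mem_iSup hp) hn.2) (mem_totalAlgebra_of_mem_iSup hq)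
    simp [apply_eq_zero_of_mem_nullIdeal hn.2, apply_eq_zero_of_mem_nullIdeal hpnq]

end IsBPrimeFree

end Perturbation

section Linearization

variable {φ φ' : B →ₗ[ℂ] ℂ} {Ai : ι → Subalgebra ℂ B} {Fi : ι → NonUnitalSubalgebra ℂ B}
  {κ : Type*} {idx : κ → ι} {a b : κ → B}

/-- `a k` is a `φ`-centered element of `A_{idx k}` differing from `b k` by a perturbation, for every
letter `k`. -/
structure IsCenteredPart (φ φ' : B →ₗ[ℂ] ℂ) (Ai : ι → Subalgebra ℂ B)
    (Fi : ι → NonUnitalSubalgebra ℂ B) (idx : κ → ι) (a b : κ → B) : Prop where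
  mem : ∀ k, a k ∈ Ai (idx k)
  apply_eq_zero : ∀ k, φ (a k) = 0
  sub_mem : ∀ k, b k - a k ∈ perturbation φ φ' Ai Fi (idx k)

theorem IsBPrimeFree.exists_isCenteredPart (h : IsBPrimeFree φ φ' Ai Fi)
    (hb : ∀ k, b k ∈ Algebra.adjoin ℂ ((Ai (idx k) : Set B) ∪ Fi (idx k)))
    (hφb : ∀ k, φ (b k) = 0) : ∃ a, IsCenteredPart φ φ' Ai Fi idx a b := by
  choose a ha hba using fun k => h.exists_sub_mem_perturbation (hb k)
  refine ⟨a, ha, fun k => ?_, hba⟩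
  rw [← apply_eq_of_sub_mem_nullIdeal (h.perturbation_le_nullIdeal _ (hba k)), hφb]

namespace IsCenteredPart

theorem hasCenteredLetters (hab : IsCenteredPart φ φ' Ai Fi idx a b) (L : List κ) :
    HasCenteredLetters φ Ai (L.map fun k => (idx k, a k)) :=
  List.forall_mem_map.2 fun k _ => ⟨hab.mem k, hab.apply_eq_zero k⟩

theorem left_mem (hab : IsCenteredPart φ φ' Ai Fi idx a b) (k : κ) : a k ∈ totalAlgebra Ai Fi :=
  mem_totalAlgebra_left (hab.mem k)

theorem sub_mem_nullIdeal (hab : IsCenteredPart φ φ' Ai Fi idx a b) (h : IsBPrimeFree φ φ' Ai Fi)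
    (k : κ) : b k - a k ∈ nullIdeal φ (totalAlgebra Ai Fi) :=
  h.perturbation_le_nullIdeal _ (hab.sub_mem k)

theorem right_mem (hab : IsCenteredPart φ φ' Ai Fi idx a b) (h : IsBPrimeFree φ φ' Ai Fi) (k : κ) :
    b k ∈ totalAlgebra Ai Fi :=
  (Subalgebra.toSubmodule (totalAlgebra Ai Fi)).sub_mem_iff_left (hab.left_mem k) |>.1
    (nullIdeal_le (hab.sub_mem_nullIdeal h k))

theorem apply_prod (hab : IsCenteredPart φ φ' Ai Fi idx a b) (h : IsBPrimeFree φ φ' Ai Fi)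
    (L : List κ) : φ (L.map b).prod = φ (L.map a).prod :=
  apply_eq_of_sub_mem_nullIdeal <| prod_sub_prod_mem_nullIdeal (fun k _ => hab.left_mem k)
    (fun k _ => hab.right_mem h k) fun k _ => hab.sub_mem_nullIdeal h k

theorem apply_prod_eq_zero (hab : IsCenteredPart φ φ' Ai Fi idx a b) (h : IsBPrimeFree φ φ' Ai Fi)
    {L : List κ} (hchain : (L.map idx).IsChain (· ≠ ·)) (hne : L ≠ []) : φ (L.map b).prod = 0 := by
  rw [hab.apply_prod h]
  simpa [Function.comp_def] using h.isFreeFamily.apply_prod_eq_zero (hab.hasCenteredLetters L)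
    (by simpa [Function.comp_def] using hchain) (by simpa using hne)

theorem sub_mul_prod_mul_sub_mem (hab : IsCenteredPart φ φ' Ai Fi idx a b)
    (h : IsBPrimeFree φ φ' Ai Fi) {k : κ} {W L : List κ}
    (hchain : ((k :: W ++ L).map idx).IsChain (· ≠ ·)) :
    (b k - a k) * (W.map a).prod * ((L.map b).prod - (L.map a).prod) ∈
      nullIdeal φ' (totalAlgebra Ai Fi) := by
  induction L generalizing W with
  | nil => simp
  | cons l L ih =>
    have htelescope : (b k - a k) * (W.map a).prod *
          (((l :: L).map b).prod - ((l :: L).map a).prod) =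
        (b k - a k) * (W.map a).prod * (b l - a l) * (L.map b).prod +
          (b k - a k) * ((W ++ [l]).map a).prod * ((L.map b).prod - (L.map a).prod) := by
      simp only [List.map_cons, List.prod_cons, List.map_append, List.prod_append, List.map_nil,
        List.prod_nil]
      noncomm_ring
    rw [htelescope]
    refine add_mem (mul_mem_nullIdeal_right ?_
      (list_prod_mem (List.forall_mem_map.2 fun k _ => hab.right_mem h k)))
      (ih (by simpa using hchain))
    have hWl : (idx k :: (W.map idx ++ [idx l])).IsChain (· ≠ ·) :=
      List.IsChain.left_of_append (l₂ := L.map idx) (by simpa using hchain)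
    simpa [Function.comp_def] using h.mul_prod_mul_mem_nullIdeal_of_mem_perturbation
      (hab.hasCenteredLetters W) (by simpa [Function.comp_def] using hWl) (hab.sub_mem k)
      (hab.sub_mem l)

theorem prod_sub_prod_sub_sum_mem (hab : IsCenteredPart φ φ' Ai Fi idx a b)
    (h : IsBPrimeFree φ φ' Ai Fi) {L : List κ} (hchain : (L.map idx).IsChain (· ≠ ·)) :
    (L.map b).prod - (L.map a).prod - ∑ k : Fin L.length,
        ((L.take k).map a).prod * (b L[k] - a L[k]) * ((L.drop (k + 1)).map a).prod ∈
      nullIdeal φ' (totalAlgebra Ai Fi) := by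
  induction L with
  | nil => simp
  | cons l L ih =>
    have hsplit : ((l :: L).map b).prod - ((l :: L).map a).prod -
          ∑ k : Fin (l :: L).length, (((l :: L).take k).map a).prod *
            (b (l :: L)[k] - a (l :: L)[k]) * (((l :: L).drop (k + 1)).map a).prod =
        (b l - a l) * ([].map a).prod * ((L.map b).prod - (L.map a).prod) +
          a l * ((L.map b).prod - (L.map a).prod - ∑ k : Fin L.length,
            ((L.take k).map a).prod * (b L[k] - a L[k]) * ((L.drop (k + 1)).map a).prod) := by
      rw [mul_sub (a l) _ (∑ k, _), Finset.mul_sum]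
      simp only [List.length_cons, Fin.sum_univ_succ, Fin.val_zero, Fin.val_succ, Fin.getElem_fin,
        List.getElem_cons_zero, List.getElem_cons_succ, List.take_zero, List.take_succ_cons,
        List.drop_zero, List.drop_succ_cons, List.map_cons, List.map_nil, List.prod_cons,
        List.prod_nil, mul_assoc]
      noncomm_ring
    rw [hsplit]
    exact add_mem (hab.sub_mul_prod_mul_sub_mem h hchain)
      (mul_mem_nullIdeal_left (hab.left_mem l) (ih hchain.of_cons))

theorem apply_prod_eq_sum (hab : IsCenteredPart φ φ' Ai Fi idx a b)
    (h : IsBPrimeFree φ φ' Ai Fi) {L : List κ} (hchain : (L.map idx).IsChain (· ≠ ·)) :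
    φ' (L.map b).prod = ∑ k : Fin L.length,
      φ (((L.take k).map a).prod * ((L.drop (k + 1)).map a).prod) * φ' (b L[k]) := by
  have ha : ∀ k, a k ∈ ⨆ i, Ai i := fun k => mem_iSup_of_mem (hab.mem k)
  have hlin := apply_eq_zero_of_mem_nullIdeal (hab.prod_sub_prod_sub_sum_mem h hchain)
  rw [map_sub, map_sub, h.map_eq_zero _ (list_prod_mem (List.forall_mem_map.2 fun k _ => ha k)),
    sub_zero, sub_eq_zero, map_sum] at hlin
  rw [hlin]
  refine Finset.sum_congr rfl fun k _ => ?_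
  have hkth : ((L.take k).map idx ++ idx L[k] :: (L.drop (k + 1)).map idx).IsChain (· ≠ ·) := by
    rwa [Fin.getElem_fin, ← List.map_cons, ← List.map_append, ← List.drop_eq_getElem_cons k.2,
      List.take_append_drop]
  have hterm := h.apply_mul_perturbation_mul (hab.hasCenteredLetters (L.take k))
    (hab.hasCenteredLetters (L.drop (k + 1))) (by simpa [Function.comp_def] using hkth)
    (hab.sub_mem L[k])
  rw [map_sub, h.map_eq_zero _ (ha _), sub_zero] at hterm
  simpa [Function.comp_def] using hterm

theorem apply_take_mul_drop_eq_zero (hab : IsCenteredPart φ φ' Ai Fi idx a b)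
    (h : IsBPrimeFree φ φ' Ai Fi) {L : List κ} (hchain : (L.map idx).IsChain (· ≠ ·)) {k : ℕ}
    (hk : ((L.map idx).take k).reverse ≠ (L.map idx).drop (k + 1)) :
    φ (((L.take k).map a).prod * ((L.drop (k + 1)).map a).prod) = 0 := by
  have hzero := h.isFreeFamily.apply_reverse_mul_eq_zero h.map_one
    (hab.hasCenteredLetters (L.take k)).reverse (hab.hasCenteredLetters (L.drop (k + 1)))
    (by simpa [Function.comp_def, List.map_take] using isChain_ne_reverse.2 (hchain.take k))
    (by simpa [Function.comp_def, List.map_drop] using hchain.drop (k + 1))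
    (by simpa [Function.comp_def, List.map_take, List.map_drop] using hk)
  simpa [Function.comp_def] using hzero

theorem apply_prod_eq_zero_of_ne (hab : IsCenteredPart φ φ' Ai Fi idx a b)
    (h : IsBPrimeFree φ φ' Ai Fi) {L : List κ} (hchain : (L.map idx).IsChain (· ≠ ·))
    (hL : ∀ k < L.length, ((L.map idx).take k).reverse ≠ (L.map idx).drop (k + 1)) :
    φ' (L.map b).prod = 0 := by
  rw [hab.apply_prod_eq_sum h hchain]
  exact Finset.sum_eq_zero fun k _ => by
    rw [hab.apply_take_mul_drop_eq_zero h hchain (hL k k.2), zero_mul]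

theorem apply_take_mul_drop (hab : IsCenteredPart φ φ' Ai Fi idx a b)
    (h : IsBPrimeFree φ φ' Ai Fi) {L : List κ} (hchain : (L.map idx).IsChain (· ≠ ·)) {m : ℕ}
    (hL : L.length = 2 * m + 1) {r : κ → κ} (hr : L.reverse = L.map r)
    (hidx : ∀ k, idx (r k) = idx k) :
    φ (((L.take m).map a).prod * ((L.drop (m + 1)).map a).prod) =
      ((L.take m).map fun k => φ (b k * b (r k))).prod := by
  have hdrop : L.drop (m + 1) = (L.take m).reverse.map r := by
    rw [List.map_reverse, ← List.reverse_eq_iff, List.reverse_drop, hr, hL, List.map_take]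
    congr 1
    omega
  have hpair := h.isFreeFamily.apply_reverse_mul_of_map_fst_eq h.map_one
    (hab.hasCenteredLetters (L.take m)).reverse (hab.hasCenteredLetters (L.drop (m + 1)))
    (by simpa [Function.comp_def, List.map_take] using isChain_ne_reverse.2 (hchain.take m))
    (by simp [Function.comp_def, hdrop, hidx])
  have hcov : ∀ k l, φ (a k * a l) = φ (b k * b l) := fun k l => by
    simpa using (hab.apply_prod h [k, l]).symm
  rw [← List.map_reverse, hdrop, List.zipWith_map, List.zipWith_map_right,
    List.zipWith_self] at hpair
  simpa [Function.comp_def, hdrop, hcov, List.prod_reverse] using hpair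

theorem apply_prod_eq_of_palindrome (hab : IsCenteredPart φ φ' Ai Fi idx a b)
    (h : IsBPrimeFree φ φ' Ai Fi) {L : List κ} (hchain : (L.map idx).IsChain (· ≠ ·)) {m : ℕ}
    (hL : L.length = 2 * m + 1) {r : κ → κ} (hr : L.reverse = L.map r)
    (hidx : ∀ k, idx (r k) = idx k) :
    φ' (L.map b).prod =
      ((L.take m).map fun k => φ (b k * b (r k))).prod * φ' (b (L[m]'(by omega))) := by
  rw [hab.apply_prod_eq_sum h hchain, Finset.sum_eq_single ⟨m, by omega⟩]
  · rw [hab.apply_take_mul_drop h hchain hL hr hidx]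
    simp
  · intro k _ hk
    rw [hab.apply_take_mul_drop_eq_zero h hchain, zero_mul]
    intro heq
    have hlen := congrArg List.length heq
    simp only [List.length_reverse, List.length_take, List.length_drop, List.length_map] at hlen
    exact hk (Fin.ext (by simp only; omega))
  · simp

end IsCenteredPart

end Linearization

section FiniteSequences

theorem isChain_ne_map_finRange {n : ℕ} {idx : Fin (n + 1) → ι}
    (h : ∀ k : Fin n, idx k.castSucc ≠ idx k.succ) :
    ((List.finRange (n + 1)).map idx).IsChain (· ≠ ·) := by
  rw [← List.ofFn_eq_map, List.isChain_ofFn]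
  exact fun k hk => h ⟨k, by omega⟩

theorem take_finRange {m n : ℕ} (h : m ≤ n) :
    (List.finRange n).take m = List.ofFn (Fin.castLE h) :=
  List.ext_getElem (by simp [h]) fun k _ _ => Fin.ext (by simp)

theorem reverse_eq_self_of_reverse_take_eq_drop {l : List ι} {k : ℕ} (hk : k < l.length)
    (h : (l.take k).reverse = l.drop (k + 1)) : l.reverse = l := by
  obtain ⟨u, x, rfl⟩ : ∃ u x, l = u ++ x :: u.reverse :=
    ⟨l.take k, l[k], by rw [h, ← List.drop_eq_getElem_cons hk, List.take_append_drop]⟩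
  simp

theorem apply_rev_of_reverse_ofFn {n : ℕ} {u : Fin n → ι}
    (h : (List.ofFn u).reverse = List.ofFn u) (k : Fin n) : u k = u k.rev := by
  rw [List.ofFn_eq_map, ← List.map_reverse, List.finRange_reverse, List.map_map,
    ← List.ofFn_eq_map, ← List.ofFn_eq_map] at h
  exact (congrFun (List.ofFn_injective h) k).symm

end FiniteSequences

section InfinitesimalFreeness

variable {φ φ' : B →ₗ[ℂ] ℂ} {Ai : ι → Subalgebra ℂ B} {Fi : ι → NonUnitalSubalgebra ℂ B}

namespace IsBPrimeFree

theorem isFreeFamily_adjoin (h : IsBPrimeFree φ φ' Ai Fi) :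
    IsFreeFamily φ fun i => (Algebra.adjoin ℂ ((Ai i : Set B) ∪ Fi i) : Set B) := by
  intro n idx b hidx hb hφb
  obtain ⟨a, hab⟩ := h.exists_isCenteredPart hb hφb
  rw [List.ofFn_eq_map]
  exact hab.apply_prod_eq_zero h (isChain_ne_map_finRange hidx) (by simp)

theorem apply_prod_eq_zero_of_not_palindrome (h : IsBPrimeFree φ φ' Ai Fi) {n : ℕ}
    {idx : Fin (n + 1) → ι} {b : Fin (n + 1) → B} (hidx : ∀ k : Fin n, idx k.castSucc ≠ idx k.succ)
    (hb : ∀ k, b k ∈ Algebra.adjoin ℂ ((Ai (idx k) : Set B) ∪ Fi (idx k)))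
    (hφb : ∀ k, φ (b k) = 0) (hpal : ¬(Even n ∧ ∀ k, idx k = idx k.rev)) :
    φ' (List.ofFn b).prod = 0 := by
  obtain ⟨a, hab⟩ := h.exists_isCenteredPart hb hφb
  rw [List.ofFn_eq_map]
  refine hab.apply_prod_eq_zero_of_ne h (isChain_ne_map_finRange hidx) fun k hk hsymm => hpal ?_
  rw [← List.ofFn_eq_map] at hsymm
  rw [List.length_finRange] at hk
  have hlen : k = n - k := by simpa [hk.le] using congrArg List.length hsymm
  exact ⟨⟨k, by omega⟩, apply_rev_of_reverse_ofFn
    (reverse_eq_self_of_reverse_take_eq_drop (by simpa using hk) hsymm)⟩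

theorem apply_prod_of_palindrome (h : IsBPrimeFree φ φ' Ai Fi) {m : ℕ}
    {idx : Fin (2 * m + 1) → ι} {b : Fin (2 * m + 1) → B}
    (hidx : ∀ k : Fin (2 * m), idx k.castSucc ≠ idx k.succ)
    (hb : ∀ k, b k ∈ Algebra.adjoin ℂ ((Ai (idx k) : Set B) ∪ Fi (idx k)))
    (hφb : ∀ k, φ (b k) = 0) (hpal : ∀ k, idx k = idx k.rev) :
    φ' (List.ofFn b).prod =
      (∏ j : Fin m, φ (b (Fin.castLE (by omega) j) * b (Fin.castLE (by omega) j).rev)) *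
        φ' (b ⟨m, by omega⟩) := by
  obtain ⟨a, hab⟩ := h.exists_isCenteredPart hb hφb
  rw [List.ofFn_eq_map, hab.apply_prod_eq_of_palindrome h (isChain_ne_map_finRange hidx)
    List.length_finRange List.finRange_reverse fun k => (hpal k).symm,
    take_finRange (by omega), List.map_ofFn, List.prod_ofFn, List.getElem_finRange]
  rfl

end IsBPrimeFree

theorem statement5_general (h : IsBPrimeFree φ φ' Ai Fi) :
    IsInfFree φ φ' fun i => (Algebra.adjoin ℂ ((Ai i : Set B) ∪ Fi i) : Set B) :=
  ⟨h.isFreeFamily_adjoin,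
    fun _ _ _ hidx hb hφb => h.apply_prod_eq_zero_of_not_palindrome hidx hb hφb,
    fun _ _ _ hidx hb hφb => h.apply_prod_of_palindrome hidx hb hφb⟩

end InfinitesimalFreeness

section Splitting

variable {F : Submodule ℂ B} {φ Φ φ' : B →ₗ[ℂ] ℂ}

theorem prod_mem_of_forall_mem (hFmulR : ∀ b : B, ∀ f ∈ F, f * b ∈ F) {w : List B}
    (hw : ∀ f ∈ w, f ∈ F) (hne : w ≠ []) : w.prod ∈ F := by
  obtain ⟨f, w, rfl⟩ := List.exists_cons_of_ne_nil hne
  rw [List.prod_cons]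
  exact hFmulR _ f (hw f List.mem_cons_self)

theorem TrivIndep.of_eqOn {Fi : ι → Set B} (h : TrivIndep Φ Fi)
    (hFmulR : ∀ b : B, ∀ f ∈ F, f * b ∈ F) (hFi : ∀ i, Fi i ⊆ F) (heq : ∀ f ∈ F, φ' f = Φ f) :
    TrivIndep φ' Fi := by
  intro n idx f hidx hf
  rw [heq _ (prod_mem_of_forall_mem hFmulR
    (List.forall_mem_ofFn_iff.2 fun k => hFi _ (hf k)) (by simp)), h n idx f hidx hf]

theorem CyclicAntimonotone.of_eqOn {A₁ F₁ F₂ : Set B} (h : CyclicAntimonotone φ Φ A₁ F₂)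
    (hFmulL : ∀ b : B, ∀ f ∈ F, b * f ∈ F) (hFmulR : ∀ b : B, ∀ f ∈ F, f * b ∈ F)
    (hF₁₂ : F₁ ⊆ F₂) (hF₁ : F₁ ⊆ F) (heq : ∀ f ∈ F, φ' f = Φ f) :
    CyclicAntimonotone φ φ' A₁ F₁ := by
  intro n hn a f ha hf
  have hne : ∀ u : Fin n → B, List.ofFn u ≠ [] := fun u => by simp [hn.ne']
  have hword : altWord a f ∈ F := hFmulL _ _ <| prod_mem_of_forall_mem hFmulR
    (List.forall_mem_ofFn_iff.2 fun k => hFmulR _ _ (hF₁ (hf k))) (hne _)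
  have hprod : (List.ofFn f).prod ∈ F := prod_mem_of_forall_mem hFmulR
    (List.forall_mem_ofFn_iff.2 fun k => hF₁ (hf k)) (hne _)
  rw [heq _ hword, heq _ hprod, h n hn a f ha fun k => hF₁₂ (hf k)]

theorem adjoin_iUnion_eq_iSup (Ai : ι → Subalgebra ℂ B) :
    Algebra.adjoin ℂ (⋃ i, (Ai i : Set B)) = ⨆ i, Ai i := by
  simp only [Algebra.adjoin_iUnion, Algebra.adjoin_eq]

theorem isBPrimeFree_of_splitting {A : Subalgebra ℂ B} {Ai : ι → Subalgebra ℂ B}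
    {Fi : ι → NonUnitalSubalgebra ℂ B} (hFmulL : ∀ b : B, ∀ f ∈ F, b * f ∈ F)
    (hFmulR : ∀ b : B, ∀ f ∈ F, f * b ∈ F) (hφ1 : φ 1 = 1) (hφF : ∀ f ∈ F, φ f = 0)
    (hφ'A : ∀ a ∈ A, φ' a = 0) (hφ'F : ∀ f ∈ F, φ' f = Φ f) (hAi : ∀ i, Ai i ≤ A)
    (hFi : ∀ i, ∀ f ∈ Fi i, f ∈ F) (hfree : IsFreeFamily φ fun i => (Ai i : Set B))
    (hcam : CyclicAntimonotone φ Φ (Algebra.adjoin ℂ (⋃ i, (Ai i : Set B)) : Set B)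
      (NonUnitalAlgebra.adjoin ℂ (⋃ i, (Fi i : Set B)) : Set B))
    (htriv : TrivIndep Φ fun i => (Fi i : Set B)) : IsBPrimeFree φ φ' Ai Fi where
  map_one := hφ1
  map_mul_mul_eq_zero i f hf x y := hφF _ (hFmulR y _ (hFmulL x f (hFi i f hf)))
  map_eq_zero a ha := hφ'A a (iSup_le hAi ha)
  isFreeFamily := hfree
  cyclicAntimonotone := by
    rw [adjoin_iUnion_eq_iSup] at hcam
    exact hcam.of_eqOn hFmulL hFmulR (NonUnitalAlgebra.subset_adjoin ℂ)
      (Set.iUnion_subset hFi) hφ'F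
  trivIndep := htriv.of_eqOn hFmulR hFi hφ'F

end Splitting

end IndexedFamilies

theorem statement5
    {B : Type*} [Ring B] [Algebra ℂ B]
    (A : Subalgebra ℂ B) (F : Submodule ℂ B)
    (hFmulL : ∀ b : B, ∀ f ∈ F, b * f ∈ F)
    (hFmulR : ∀ b : B, ∀ f ∈ F, f * b ∈ F)
    (hAF : ∀ x ∈ A, x ∈ F → x = 0)
    (hdec : ∀ x : B, ∃ a ∈ A, ∃ f ∈ F, x = a + f)
    (φ Φ φ' : B →ₗ[ℂ] ℂ)
    (hφ1 : φ 1 = 1) (hφF : ∀ f ∈ F, φ f = 0)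
    (hφ'A : ∀ a ∈ A, φ' a = 0) (hφ'F : ∀ f ∈ F, φ' f = Φ f)
    {ι : Type*}
    (Ai : ι → Subalgebra ℂ B) (hAi : ∀ i, Ai i ≤ A)
    (Fi : ι → NonUnitalSubalgebra ℂ B) (hFi : ∀ i, ∀ f ∈ Fi i, f ∈ F)
    (hfree : IsFreeFamily ⇑φ (fun i => (Ai i : Set B)))
    (hcam : CyclicAntimonotone ⇑φ ⇑Φ
      (Algebra.adjoin ℂ (⋃ i, (Ai i : Set B)) : Set B)
      (NonUnitalAlgebra.adjoin ℂ (⋃ i, (Fi i : Set B)) : Set B))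
    (htriv : TrivIndep ⇑Φ (fun i => (Fi i : Set B))) :
    IsInfFree ⇑φ ⇑φ'
      (fun i => (Algebra.adjoin ℂ ((Ai i : Set B) ∪ (Fi i : Set B)) : Set B)) :=
  statement5_general <|
    isBPrimeFree_of_splitting hFmulL hFmulR hφ1 hφF hφ'A hφ'F hAi hFi hfree hcam htriv

end TypeBPrime
end

section
/- Let (A_i)_{i∈I} be unital subalgebras of A, (F_i)_{i∈I} subalgebras of F, and P ∈ F with Φ(P) ≠ 0. Assume that (A_i)_{i∈I} are free with respect to φ and that the pair (⟨A_i : i∈I⟩, ⟨{P} ∪ ⋃_{i∈I} F_i⟩) of generated subalgebras is cyclic-antimonotone independent (i.e. ((A_i)_{i∈I}, (F_j)_{j∈I⊔{*}}) is weakly B′-free, where F_* := {c Pⁿ : c ∈ ℂ, n ≥ 1}). Then the type B′ subalgebras B_i := A_i⟨F_i⟩ (i ∈ I) are conditionally free with respect to (φ, φ_P) if and only if the subalgebras (F_i)_{i∈I} are Boolean independent with respect to φ_P. -/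
open scoped BigOperators

namespace TypeBPrime

variable {B : Type*} [Ring B] [Algebra ℂ B]

/-!
Under `Φ (g * ·)` with `g ∈ ℱ`, every letter from `𝒜` enclosed between letters from `ℱ` is replaced
by its `φ`-value. Let `b₁ ⋯ bₙ` be an alternating product of centered letters, `bₖ` from the `k`-th
algebra `Aᵢ⟨Fᵢ⟩`, put `r = bₖ₊₁ ⋯ bₙ`, and let `p` be an alternating word of centered letters from
the `Aᵢ` that ends in the `Aᵢ` of `bₖ`. Then `Φ (g * p * r) = 0`: write `bₖ₊₁ = a + w` with `w` a
combination of words; `a` prolongs `p` to a longer centered word, and the first `F`-letter of each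
word in `w` encloses `p`, times one more factor, in a gap whose `φ`-value vanishes by freeness.
Hence every letter from `Aᵢ` at the end of `bₖ` is replaced by its `φ`-value too, and `bₖ` acts like
an element `fₖ` of `Fᵢ`. So `φ_P (b₁ ⋯ bₙ) = φ_P (f₁ ⋯ fₙ)`, and conditional freeness of the
`Aᵢ⟨Fᵢ⟩` reduces to Boolean independence of the `Fᵢ`.
-/

section AltWord

variable {R : Type*} [Ring R]

theorem altWord_succ {n : ℕ} (a : Fin (n + 2) → R) (f : Fin (n + 1) → R) :
    altWord a f = a 0 * (f 0 * altWord (fun k => a k.succ) fun k => f k.succ) := by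
  simp [altWord, List.ofFn_succ, mul_assoc]

theorem altWord_cons {n : ℕ} (x g : R) (a : Fin (n + 1) → R) (f : Fin n → R) :
    altWord (Fin.cons x a) (Fin.cons g f : Fin (n + 1) → R) = x * (g * altWord a f) := by
  simp [altWord_succ]

theorem altWord_eq_prod_mul_last {n : ℕ} (a : Fin (n + 1) → R) (f : Fin n → R) :
    altWord a f = (List.ofFn fun k : Fin n => a k.castSucc * f k).prod * a (Fin.last n) := by
  induction n with
  | zero => simp [altWord]
  | succ n ih => rw [altWord_succ, ih]; simp [List.ofFn_succ, mul_assoc]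

theorem altWord_mem {S : Subalgebra ℂ B} {n : ℕ} {a : Fin (n + 1) → B} {f : Fin n → B}
    (ha : ∀ k, a k ∈ S) (hf : ∀ k, f k ∈ S) : altWord a f ∈ S := by
  refine mul_mem (ha 0) (list_prod_mem ?_)
  simpa [List.forall_mem_ofFn_iff] using fun k => mul_mem (hf k) (ha k.succ)

theorem exists_eq_altWord_of_mem_closure {𝒜 : Subalgebra ℂ B} {ℱ : Set B} {r : B}
    (hr : r ∈ Submonoid.closure ((𝒜 : Set B) ∪ ℱ)) :
    ∃ (n : ℕ) (a : Fin (n + 1) → B) (f : Fin n → B),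
      (∀ k, a k ∈ 𝒜) ∧ (∀ k, f k ∈ ℱ) ∧ r = altWord a f := by
  induction hr using Submonoid.closure_induction_left with
  | one => exact ⟨0, 1, Fin.elim0, fun _ => one_mem 𝒜, fun k => k.elim0, by simp [altWord]⟩
  | mul_left x hx _ _ ih =>
    obtain ⟨n, a, f, ha, hf, rfl⟩ := ih
    rcases hx with hx | hx
    · refine ⟨n, Fin.cons (x * a 0) (Fin.tail a), f, ?_, hf, by simp [altWord, Fin.tail, mul_assoc]⟩
      exact Fin.forall_fin_succ.2 ⟨mul_mem hx (ha 0), fun k => ha k.succ⟩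
    · refine ⟨n + 1, Fin.cons 1 a, Fin.cons x f, ?_, ?_, by rw [altWord_cons, one_mul]⟩
      · exact Fin.forall_fin_succ.2 ⟨one_mem 𝒜, ha⟩
      · exact Fin.forall_fin_succ.2 ⟨hx, hf⟩

theorem map_mul_mem_wordSpan_mul_eq_zero {φ : B →ₗ[ℂ] ℂ} {A₁ F₁ : Set B}
    (hF₁ : ∀ f ∈ F₁, ∀ x y, φ (x * f * y) = 0) {w : B} (hw : w ∈ wordSpan A₁ F₁) (x y : B) :
    φ (x * w * y) = 0 := by
  induction hw using Submodule.span_induction with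
  | mem w hw =>
    obtain ⟨n, hn, a, f, -, hf, rfl⟩ := hw
    obtain ⟨m, rfl⟩ := Nat.exists_eq_add_one.2 hn
    have hword := hF₁ (f 0) (hf 0) (x * a 0)
      (altWord (fun k => a k.succ) (fun k => f k.succ) * y)
    simpa only [altWord_succ, mul_assoc] using hword
  | zero => simp
  | add v w _ _ hv hw => simp [mul_add, add_mul, hv, hw]
  | smul c w _ hw => simp [hw]

theorem mem_typeBSub_of_mem (A₁ : Subalgebra ℂ B) {F₁ : Set B} {f : B} (hf : f ∈ F₁) :
    f ∈ typeBSub (A₁ : Set B) F₁ := by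
  refine ⟨0, zero_mem A₁, f, Submodule.subset_span ?_, (zero_add f).symm⟩
  exact ⟨1, one_pos, 1, fun _ => f, fun _ => one_mem A₁, fun _ => hf, by simp [altWord]⟩

end AltWord

section CyclicAntimonotone

variable {φ Φ : B →ₗ[ℂ] ℂ} {𝒜 : Subalgebra ℂ B} {ℱ : NonUnitalSubalgebra ℂ B} {g x h r : B}

theorem CyclicAntimonotone.map_mul_altWord (hcam : CyclicAntimonotone φ Φ (𝒜 : Set B) ℱ)
    (hg : g ∈ ℱ) {n : ℕ} {a : Fin (n + 1) → B} {f : Fin n → B} (ha : ∀ k, a k ∈ 𝒜)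
    (hf : ∀ k, f k ∈ ℱ) :
    Φ (g * altWord a f) = (∏ k, φ (a k)) * Φ (g * (List.ofFn f).prod) := by
  have hword := hcam (n + 1) n.succ_pos (Fin.cons 1 a) (Fin.cons g f)
    (Fin.forall_fin_succ.2 ⟨one_mem 𝒜, ha⟩) (Fin.forall_fin_succ.2 ⟨hg, hf⟩)
  have hcoeff : φ (a (Fin.last n)) * ∏ k ∈ Finset.Ioo 0 (Fin.last (n + 1)),
      φ ((Fin.cons 1 a : Fin (n + 2) → B) k) = ∏ k, φ (a k) := by
    have hlast : a (Fin.last n) = (Fin.cons 1 a : Fin (n + 2) → B) (Fin.last (n + 1)) := by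
      rw [← Fin.succ_last, Fin.cons_succ]
    rw [hlast, Finset.mul_prod_Ioo_eq_prod_Ioc (f := fun k => φ (_ : B)) (Fin.last_pos),
      ← Fin.top_eq_last, Finset.Ioc_top, Fin.prod_Ioi_zero]
    simp only [Fin.cons_succ]
  rw [altWord_cons, one_mul] at hword
  rw [hword, ← hcoeff]
  simp [List.ofFn_succ, ← Fin.succ_last]

theorem CyclicAntimonotone.map_mul (hcam : CyclicAntimonotone φ Φ (𝒜 : Set B) ℱ)
    (hg : g ∈ ℱ) (hx : x ∈ 𝒜) : Φ (g * x) = φ x * Φ g := by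
  simpa [altWord] using hcam.map_mul_altWord hg (n := 0) (a := fun _ => x) (f := Fin.elim0)
    (fun _ => hx) (fun k => k.elim0)

theorem CyclicAntimonotone.map_mul_mul_mul (hcam : CyclicAntimonotone φ Φ (𝒜 : Set B) ℱ)
    (hg : g ∈ ℱ) (hx : x ∈ 𝒜) (hh : h ∈ ℱ) (hr : r ∈ Algebra.adjoin ℂ ((𝒜 : Set B) ∪ ℱ)) :
    Φ (g * x * h * r) = φ x * Φ (g * h * r) := by
  rw [← Subalgebra.mem_toSubmodule, Algebra.adjoin_eq_span] at hr
  induction hr using Submodule.span_induction with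
  | mem r hr =>
    obtain ⟨n, a, f, ha, hf, rfl⟩ := exists_eq_altWord_of_mem_closure hr
    have hcons := hcam.map_mul_altWord hg (a := Fin.cons x a) (f := Fin.cons h f)
      (Fin.forall_fin_succ.2 ⟨hx, ha⟩) (Fin.forall_fin_succ.2 ⟨hh, hf⟩)
    rw [altWord_cons] at hcons
    rw [hcam.map_mul_altWord (mul_mem hg hh) ha hf]
    simpa [Fin.prod_univ_succ, List.ofFn_succ, mul_assoc] using hcons
  | zero => simp
  | add r s _ _ hr hs => simp only [mul_add, map_add, hr, hs]
  | smul c r _ hr => simp only [mul_smul_comm, map_smul, hr, smul_eq_mul]; ring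

theorem CyclicAntimonotone.map_mul_prod_mul (hcam : CyclicAntimonotone φ Φ (𝒜 : Set B) ℱ)
    (hg : g ∈ ℱ) {n : ℕ} {a f : Fin n → B} (ha : ∀ k, a k ∈ 𝒜) (hf : ∀ k, f k ∈ ℱ)
    (hr : r ∈ Algebra.adjoin ℂ ((𝒜 : Set B) ∪ ℱ)) :
    Φ (g * (List.ofFn fun k => a k * f k).prod * r) =
      (∏ k, φ (a k)) * Φ (g * (List.ofFn f).prod * r) := by
  induction n generalizing g with
  | zero => simp
  | succ n ih =>
    have htail : (List.ofFn fun k : Fin n => a k.succ * f k.succ).prod * r ∈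
        Algebra.adjoin ℂ ((𝒜 : Set B) ∪ ℱ) := by
      refine mul_mem (list_prod_mem fun y hy => ?_) hr
      obtain ⟨k, rfl⟩ := List.mem_ofFn.1 hy
      exact mul_mem (Algebra.subset_adjoin (.inl (ha _))) (Algebra.subset_adjoin (.inr (hf _)))
    have hhead := hcam.map_mul_mul_mul hg (ha 0) (hf 0) htail
    have hrest := ih (mul_mem hg (hf 0)) (fun k => ha k.succ) (fun k => hf k.succ)
    rw [Fin.prod_univ_succ, mul_assoc, List.ofFn_succ, List.ofFn_succ, List.prod_cons,
      List.prod_cons]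
    simp only [mul_assoc] at hhead hrest ⊢
    rw [hhead, hrest]

end CyclicAntimonotone

section CenteredWords

variable {R : Type*} [Ring R] {ι : Type*}

/-- The products of alternating words of `φ`-centered letters from the sets `Alg i` whose last
letter belongs to `Alg i`. -/
def centeredWords (φ : B → ℂ) (Alg : ι → Set B) (i : ι) : Set B :=
  {p | ∃ (n : ℕ) (idx : Fin (n + 1) → ι) (a : Fin (n + 1) → B),
    idx (Fin.last n) = i ∧ (∀ k : Fin n, idx k.castSucc ≠ idx k.succ) ∧
    (∀ k, a k ∈ Alg (idx k)) ∧ (∀ k, φ (a k) = 0) ∧ p = (List.ofFn a).prod}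

theorem mem_centeredWords_of_mem {φ : R → ℂ} {Alg : ι → Set R} {i : ι} {a : R} (ha : a ∈ Alg i)
    (ha₀ : φ a = 0) : a ∈ centeredWords φ Alg i :=
  ⟨0, fun _ => i, fun _ => a, rfl, fun k => k.elim0, fun _ => ha, fun _ => ha₀, by simp⟩

theorem mul_mem_centeredWords {φ : R → ℂ} {Alg : ι → Set R} {i j : ι} {p a : R}
    (hp : p ∈ centeredWords φ Alg j) (hji : j ≠ i) (ha : a ∈ Alg i) (ha₀ : φ a = 0) :
    p * a ∈ centeredWords φ Alg i := by
  obtain ⟨n, idx, c, rfl, hne, hc, hc₀, rfl⟩ := hp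
  refine ⟨n + 1, Fin.snoc (α := fun _ => ι) idx i, Fin.snoc (α := fun _ => R) c a,
    Fin.snoc_last .., ?_, ?_, ?_, ?_⟩
  · simpa [Fin.forall_fin_succ', ← Fin.castSucc_succ] using ⟨hne, hji⟩
  · exact Fin.forall_fin_succ'.2 ⟨by simpa using hc, by simpa using ha⟩
  · exact Fin.forall_fin_succ'.2 ⟨by simpa using hc₀, by simpa using ha₀⟩
  · simp only [List.ofFn_succ', Fin.snoc_castSucc, Fin.snoc_last, List.concat_eq_append,
      List.prod_append, List.prod_singleton]

variable {φ : B →ₗ[ℂ] ℂ} {Ai : ι → Subalgebra ℂ B} {i j : ι} {p a : B}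

theorem mem_of_mem_centeredWords {𝒜 : Subalgebra ℂ B} (hAi : ∀ i, Ai i ≤ 𝒜)
    (hp : p ∈ centeredWords φ (fun i => (Ai i : Set B)) i) : p ∈ 𝒜 := by
  obtain ⟨n, idx, c, -, -, hc, -, rfl⟩ := hp
  refine list_prod_mem fun y hy => ?_
  obtain ⟨k, rfl⟩ := List.mem_ofFn.1 hy
  exact hAi _ (hc k)

theorem IsFreeFamily.map_centeredWord {Alg : ι → Set B} (hfree : IsFreeFamily φ Alg)
    (hp : p ∈ centeredWords φ Alg i) : φ p = 0 := by
  obtain ⟨n, idx, c, -, hne, hc, hc₀, rfl⟩ := hp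
  exact hfree n idx c hne hc hc₀

theorem map_sub_smul_one (hφ1 : φ 1 = 1) (a : B) : φ (a - φ a • 1) = 0 := by
  simp [hφ1]

theorem IsFreeFamily.map_centeredWord_mul (hfree : IsFreeFamily φ fun i => (Ai i : Set B))
    (hφ1 : φ 1 = 1) (hp : p ∈ centeredWords φ (fun i => (Ai i : Set B)) j) (hji : j ≠ i)
    (ha : a ∈ Ai i) : φ (p * a) = 0 := by
  have hcent : φ (p * (a - φ a • 1)) = 0 := hfree.map_centeredWord <|
    mul_mem_centeredWords hp hji (sub_mem ha ((Ai i).smul_mem (one_mem _) _))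
      (map_sub_smul_one hφ1 a)
  simpa [mul_sub, hfree.map_centeredWord hp] using hcent

theorem map_mul_prod_congr {n : ℕ} {a b : Fin n → B}
    (hab : ∀ k x y, φ (x * (b k - a k) * y) = 0) (x : B) :
    φ (x * (List.ofFn b).prod) = φ (x * (List.ofFn a).prod) := by
  induction n generalizing x with
  | zero => simp
  | succ n ih =>
    have hhead := hab 0 x (List.ofFn fun k => a k.succ).prod
    have htail := ih (fun k => hab k.succ) (x * b 0)
    rw [mul_sub, sub_mul, map_sub, sub_eq_zero] at hhead
    rw [hhead] at htail
    simpa [List.ofFn_succ, mul_assoc] using htail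

theorem IsFreeFamily.typeBSub {Alg Fs : ι → Set B} (hfree : IsFreeFamily φ Alg)
    (hφF : ∀ i, ∀ f ∈ Fs i, ∀ x y, φ (x * f * y) = 0) :
    IsFreeFamily φ fun i => typeBSub (Alg i) (Fs i) := by
  intro n idx b hne hb hb₀
  choose a ha w hw hbaw using hb
  have hab (k) (x y) : φ (x * (b k - a k) * y) = 0 := by
    rw [hbaw k, add_sub_cancel_left]
    exact map_mul_mem_wordSpan_mul_eq_zero (hφF _) (hw k) x y
  have ha₀ (k) : φ (a k) = 0 := by simpa [hb₀ k] using hab k 1 1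
  have hprod := map_mul_prod_congr hab 1
  rwa [one_mul, one_mul, hfree n idx a hne ha ha₀] at hprod

theorem CFree.boolIndep {φ ψ : R → ℂ} {Alg C : ι → Set R} (hc : CFree φ ψ Alg)
    (hCAlg : ∀ i, C i ⊆ Alg i) (hC₀ : ∀ i, ∀ c ∈ C i, φ c = 0) : BoolIndep ψ C :=
  fun n idx c hne hmem =>
    hc.2 n idx c hne (fun k => hCAlg _ (hmem k)) fun k => hC₀ _ _ (hmem k)

end CenteredWords

section Compression

variable {ι : Type*} {φ Φ : B →ₗ[ℂ] ℂ} {𝒜 : Subalgebra ℂ B} {ℱ : NonUnitalSubalgebra ℂ B}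
  {Ai : ι → Subalgebra ℂ B} {Fi : ι → NonUnitalSubalgebra ℂ B} {i j : ι} {b r : B}

/-- The elements `r` of the algebra generated by `𝒜` and `ℱ` such that `Φ (g * p * r) = 0` for all
`g ∈ ℱ` and all centered words `p` ending in `Alg i`. These are the right factors in front of which
a centered last letter from `Alg i` can be dropped. -/
def centeredAnnihilator (φ Φ : B → ℂ) (Alg : ι → Set B) (𝒜 ℱ : Set B) (i : ι) : Set B :=
  {r | r ∈ Algebra.adjoin ℂ (𝒜 ∪ ℱ) ∧
    ∀ g ∈ ℱ, ∀ p ∈ centeredWords φ Alg i, Φ (g * p * r) = 0}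

theorem one_mem_centeredAnnihilator (hcam : CyclicAntimonotone φ Φ (𝒜 : Set B) ℱ)
    (hfree : IsFreeFamily φ fun i => (Ai i : Set B)) (hAi : ∀ i, Ai i ≤ 𝒜) :
    1 ∈ centeredAnnihilator φ Φ (fun i => (Ai i : Set B)) 𝒜 ℱ i := by
  refine ⟨one_mem _, fun g hg p hp => ?_⟩
  rw [mul_one, hcam.map_mul hg (mem_of_mem_centeredWords hAi hp), hfree.map_centeredWord hp,
    zero_mul]

theorem typeBSub_subset_adjoin {A₁ F₁ A₂ F₂ : Set B} (hA : A₁ ⊆ A₂) (hF : F₁ ⊆ F₂) :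
    typeBSub A₁ F₁ ⊆ Algebra.adjoin ℂ (A₂ ∪ F₂) := by
  have hA' : A₁ ⊆ Algebra.adjoin ℂ (A₂ ∪ F₂) := fun a ha => Algebra.subset_adjoin (.inl (hA ha))
  have hF' : F₁ ⊆ Algebra.adjoin ℂ (A₂ ∪ F₂) := fun f hf => Algebra.subset_adjoin (.inr (hF hf))
  rintro _ ⟨a, ha, w, hw, rfl⟩
  refine add_mem (hA' ha) ?_
  refine (Submodule.span_le (p := Subalgebra.toSubmodule (Algebra.adjoin ℂ (A₂ ∪ F₂)))).2 ?_ hw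
  rintro _ ⟨n, -, a, f, ha, hf, rfl⟩
  exact altWord_mem (fun k => hA' (ha k)) fun k => hF' (hf k)

theorem map_mul_centeredWord_mul_wordSpan_mul (hcam : CyclicAntimonotone φ Φ (𝒜 : Set B) ℱ)
    (hfree : IsFreeFamily φ fun i => (Ai i : Set B)) (hφ1 : φ 1 = 1) (hAi : ∀ i, Ai i ≤ 𝒜)
    (hFi : Fi i ≤ ℱ) {g p w : B} (hg : g ∈ ℱ)
    (hp : p ∈ centeredWords φ (fun i => (Ai i : Set B)) j) (hji : j ≠ i)
    (hw : w ∈ wordSpan (Ai i : Set B) (Fi i)) (hr : r ∈ Algebra.adjoin ℂ ((𝒜 : Set B) ∪ ℱ)) :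
    Φ (g * p * w * r) = 0 := by
  induction hw using Submodule.span_induction with
  | mem w hw =>
    obtain ⟨n, hn, a, f, ha, hf, rfl⟩ := hw
    obtain ⟨m, rfl⟩ := Nat.exists_eq_add_one.2 hn
    have htail : altWord (fun k => a k.succ) (fun k => f k.succ) * r ∈
        Algebra.adjoin ℂ ((𝒜 : Set B) ∪ ℱ) :=
      mul_mem (altWord_mem (fun k => Algebra.subset_adjoin (.inl (hAi i (ha _))))
        fun k => Algebra.subset_adjoin (.inr (hFi (hf _)))) hr
    have hpa_mem : p * a 0 ∈ 𝒜 := mul_mem (mem_of_mem_centeredWords hAi hp) (hAi i (ha 0))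
    have hzero := hcam.map_mul_mul_mul hg hpa_mem (hFi (hf 0)) htail
    rw [hfree.map_centeredWord_mul hφ1 hp hji (ha 0), zero_mul] at hzero
    simpa only [altWord_succ, mul_assoc] using hzero
  | zero => simp
  | add v w _ _ hv hw => simp [mul_add, add_mul, hv, hw]
  | smul c w _ hw => simp [hw]

theorem map_eq_zero_of_mem_typeBSub {A₁ F₁ : Set B} (hF₁ : ∀ f ∈ F₁, ∀ x y, φ (x * f * y) = 0)
    {a w : B} (hw : w ∈ wordSpan A₁ F₁) (haw : φ (a + w) = 0) : φ a = 0 := by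
  have hw₀ : φ w = 0 := by simpa using map_mul_mem_wordSpan_mul_eq_zero hF₁ hw 1 1
  simpa [hw₀] using haw

theorem mul_mem_centeredAnnihilator (hcam : CyclicAntimonotone φ Φ (𝒜 : Set B) ℱ)
    (hfree : IsFreeFamily φ fun i => (Ai i : Set B)) (hφ1 : φ 1 = 1) (hAi : ∀ i, Ai i ≤ 𝒜)
    (hFi : Fi i ≤ ℱ) (hφF : ∀ f ∈ Fi i, ∀ x y, φ (x * f * y) = 0)
    (hji : j ≠ i) (hb : b ∈ typeBSub (Ai i : Set B) (Fi i)) (hb₀ : φ b = 0)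
    (hr : r ∈ centeredAnnihilator φ Φ (fun i => (Ai i : Set B)) 𝒜 ℱ i) :
    b * r ∈ centeredAnnihilator φ Φ (fun i => (Ai i : Set B)) 𝒜 ℱ j := by
  refine ⟨mul_mem (typeBSub_subset_adjoin (hAi i) hFi hb) hr.1, fun g hg p hp => ?_⟩
  obtain ⟨a, ha, w, hw, rfl⟩ := hb
  have ha₀ : φ a = 0 := map_eq_zero_of_mem_typeBSub hφF hw hb₀
  have hpar : Φ (g * (p * a) * r) = 0 := hr.2 g hg _ (mul_mem_centeredWords hp hji ha ha₀)
  have hpwr := map_mul_centeredWord_mul_wordSpan_mul hcam hfree hφ1 hAi hFi hg hp hji hw hr.1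
  simp only [mul_assoc] at hpar hpwr
  simp only [mul_assoc, add_mul, mul_add, map_add, hpar, hpwr, add_zero]

theorem map_mul_mul_of_mem_centeredAnnihilator (hφ1 : φ 1 = 1) {g a : B} (hg : g ∈ ℱ)
    (ha : a ∈ Ai i) (hr : r ∈ centeredAnnihilator φ Φ (fun i => (Ai i : Set B)) 𝒜 ℱ i) :
    Φ (g * a * r) = φ a * Φ (g * r) := by
  have hcent : Φ (g * (a - φ a • 1) * r) = 0 := hr.2 g hg _ <|
    mem_centeredWords_of_mem (sub_mem ha ((Ai i).smul_mem (one_mem _) _)) (map_sub_smul_one hφ1 a)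
  simpa [mul_sub, sub_mul, sub_eq_zero] using hcent

theorem prod_ofFn_mem (S : NonUnitalSubalgebra ℂ B) {n : ℕ} {f : Fin (n + 1) → B}
    (hf : ∀ k, f k ∈ S) : (List.ofFn f).prod ∈ S := by
  induction n with
  | zero => simpa using hf 0
  | succ n ih =>
    rw [List.ofFn_succ, List.prod_cons]
    exact mul_mem (hf 0) (ih fun k => hf k.succ)

/-- In front of a right factor that annihilates the centered words ending in `Alg i`, and after a
left factor from `ℱ`, the letter `b` may be replaced by `f`. -/
def IsCompression (φ Φ : B → ℂ) (Alg : ι → Set B) (𝒜 ℱ : Set B) (i : ι) (b f : B) : Prop :=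
  ∀ g ∈ ℱ, ∀ r ∈ centeredAnnihilator φ Φ Alg 𝒜 ℱ i, Φ (g * b * r) = Φ (g * f * r)

theorem exists_compression_of_mem_wordSpan (hcam : CyclicAntimonotone φ Φ (𝒜 : Set B) ℱ)
    (hφ1 : φ 1 = 1) (hAi : Ai i ≤ 𝒜) (hFi : Fi i ≤ ℱ) {w : B}
    (hw : w ∈ wordSpan (Ai i : Set B) (Fi i)) :
    ∃ f ∈ Fi i, IsCompression φ Φ (fun i => (Ai i : Set B)) 𝒜 ℱ i w f := by
  induction hw using Submodule.span_induction with
  | mem w hw =>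
    obtain ⟨n, hn, a, f, ha, hf, rfl⟩ := hw
    obtain ⟨m, rfl⟩ := Nat.exists_eq_add_one.2 hn
    have hprod : (List.ofFn f).prod ∈ Fi i := prod_ofFn_mem (Fi i) hf
    refine ⟨(∏ k, φ (a k)) • (List.ofFn f).prod, SMulMemClass.smul_mem _ hprod, fun g hg r hr => ?_⟩
    have hlast : a (Fin.last _) * r ∈ Algebra.adjoin ℂ ((𝒜 : Set B) ∪ ℱ) :=
      mul_mem (Algebra.subset_adjoin (.inl (hAi (ha _)))) hr.1
    calc Φ (g * altWord a f * r)
        = (∏ k : Fin (m + 1), φ (a k.castSucc)) *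
            Φ (g * (List.ofFn f).prod * a (Fin.last _) * r) := by
          have hfactor := hcam.map_mul_prod_mul hg (a := fun k : Fin (m + 1) => a k.castSucc)
            (fun k => hAi (ha _)) (fun k => hFi (hf k)) hlast
          simpa only [altWord_eq_prod_mul_last, mul_assoc] using hfactor
      _ = (∏ k, φ (a k)) * Φ (g * (List.ofFn f).prod * r) := by
          rw [map_mul_mul_of_mem_centeredAnnihilator hφ1 (mul_mem hg (hFi hprod)) (ha _) hr,
            Fin.prod_univ_castSucc fun k => φ (a k)]
          ring
      _ = Φ (g * ((∏ k, φ (a k)) • (List.ofFn f).prod) * r) := by simp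
  | zero => exact ⟨0, zero_mem _, fun _ _ _ _ => rfl⟩
  | add v w _ _ hv hw =>
    obtain ⟨e, he, hve⟩ := hv
    obtain ⟨f, hf, hwf⟩ := hw
    refine ⟨e + f, add_mem he hf, fun g hg r hr => ?_⟩
    simp only [mul_add, add_mul, map_add, hve g hg r hr, hwf g hg r hr]
  | smul c w _ hw =>
    obtain ⟨f, hf, hwf⟩ := hw
    refine ⟨c • f, SMulMemClass.smul_mem c hf, fun g hg r hr => ?_⟩
    simp only [mul_smul_comm, smul_mul_assoc, map_smul, hwf g hg r hr]

theorem exists_compression (hcam : CyclicAntimonotone φ Φ (𝒜 : Set B) ℱ) (hφ1 : φ 1 = 1)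
    (hAi : Ai i ≤ 𝒜) (hFi : Fi i ≤ ℱ) (hφF : ∀ f ∈ Fi i, ∀ x y, φ (x * f * y) = 0)
    (hb : b ∈ typeBSub (Ai i : Set B) (Fi i)) (hb₀ : φ b = 0) :
    ∃ f ∈ Fi i, IsCompression φ Φ (fun i => (Ai i : Set B)) 𝒜 ℱ i b f := by
  obtain ⟨a, ha, w, hw, rfl⟩ := hb
  obtain ⟨f, hf, hwf⟩ := exists_compression_of_mem_wordSpan hcam hφ1 hAi hFi hw
  refine ⟨f, hf, fun g hg r hr => ?_⟩
  rw [mul_add, add_mul, map_add, hwf g hg r hr,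
    map_mul_mul_of_mem_centeredAnnihilator hφ1 hg ha hr,
    map_eq_zero_of_mem_typeBSub hφF hw hb₀, zero_mul, zero_add]

theorem prod_mem_centeredAnnihilator (hcam : CyclicAntimonotone φ Φ (𝒜 : Set B) ℱ)
    (hfree : IsFreeFamily φ fun i => (Ai i : Set B)) (hφ1 : φ 1 = 1) (hAi : ∀ i, Ai i ≤ 𝒜)
    (hFi : ∀ i, Fi i ≤ ℱ) (hφF : ∀ i, ∀ f ∈ Fi i, ∀ x y, φ (x * f * y) = 0) {n : ℕ}
    {idx : Fin (n + 1) → ι} {b : Fin n → B} (hne : ∀ k : Fin n, idx k.castSucc ≠ idx k.succ)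
    (hb : ∀ k, b k ∈ typeBSub (Ai (idx k.succ) : Set B) (Fi (idx k.succ)))
    (hb₀ : ∀ k, φ (b k) = 0) :
    (List.ofFn b).prod ∈ centeredAnnihilator φ Φ (fun i => (Ai i : Set B)) 𝒜 ℱ (idx 0) := by
  induction n with
  | zero => exact one_mem_centeredAnnihilator hcam hfree hAi
  | succ n ih =>
    rw [List.ofFn_succ, List.prod_cons]
    exact mul_mem_centeredAnnihilator hcam hfree hφ1 hAi (hFi _) (hφF _) (hne 0) (hb 0) (hb₀ 0)
      (ih (idx := fun k => idx k.succ) (fun k => hne k.succ) (fun k => hb k.succ)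
        fun k => hb₀ k.succ)

theorem IsCompression.map_mul_eq (hcam : CyclicAntimonotone φ Φ (𝒜 : Set B) ℱ)
    (hfree : IsFreeFamily φ fun i => (Ai i : Set B)) (hAi : ∀ i, Ai i ≤ 𝒜) {f g : B}
    (hbf : IsCompression φ Φ (fun i => (Ai i : Set B)) 𝒜 ℱ i b f) (hg : g ∈ ℱ) :
    Φ (g * b) = Φ (g * f) := by
  simpa using hbf g hg 1 (one_mem_centeredAnnihilator hcam hfree hAi)

theorem map_mul_prod_eq_of_isCompression (hcam : CyclicAntimonotone φ Φ (𝒜 : Set B) ℱ)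
    (hfree : IsFreeFamily φ fun i => (Ai i : Set B)) (hφ1 : φ 1 = 1) (hAi : ∀ i, Ai i ≤ 𝒜)
    (hFi : ∀ i, Fi i ≤ ℱ) (hφF : ∀ i, ∀ f ∈ Fi i, ∀ x y, φ (x * f * y) = 0) {n : ℕ}
    {idx : Fin (n + 1) → ι} {b f : Fin (n + 1) → B}
    (hne : ∀ k : Fin n, idx k.castSucc ≠ idx k.succ)
    (hb : ∀ k, b k ∈ typeBSub (Ai (idx k) : Set B) (Fi (idx k))) (hb₀ : ∀ k, φ (b k) = 0)
    (hf : ∀ k, f k ∈ ℱ)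
    (hbf : ∀ k, IsCompression φ Φ (fun i => (Ai i : Set B)) 𝒜 ℱ (idx k) (b k) (f k))
    {g : B} (hg : g ∈ ℱ) :
    Φ (g * (List.ofFn b).prod) = Φ (g * (List.ofFn f).prod) := by
  induction n generalizing g with
  | zero => simpa using (hbf 0).map_mul_eq hcam hfree hAi hg
  | succ n ih =>
    have htail := prod_mem_centeredAnnihilator hcam hfree hφ1 hAi hFi hφF hne
      (fun k => hb k.succ) fun k => hb₀ k.succ
    calc Φ (g * (List.ofFn b).prod)
        = Φ (g * f 0 * (List.ofFn fun k => b k.succ).prod) := by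
          rw [List.ofFn_succ, List.prod_cons, ← mul_assoc, hbf 0 g hg _ htail]
      _ = Φ (g * f 0 * (List.ofFn fun k => f k.succ).prod) :=
          ih (idx := fun k => idx k.succ) (fun k => hne k.succ) (fun k => hb k.succ)
            (fun k => hb₀ k.succ) (fun k => hf k.succ) (fun k => hbf k.succ) (mul_mem hg (hf 0))
      _ = Φ (g * (List.ofFn f).prod) := by
          rw [List.ofFn_succ (f := f), List.prod_cons, ← mul_assoc]

end Compression

theorem statement7_general
    {B : Type*} [Ring B] [Algebra ℂ B]
    (φ Φ : B →ₗ[ℂ] ℂ) (hφ1 : φ 1 = 1)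
    {ι : Type*} (Ai : ι → Subalgebra ℂ B) (Fi : ι → NonUnitalSubalgebra ℂ B)
    (hφF : ∀ i, ∀ f ∈ Fi i, ∀ x y, φ (x * f * y) = 0)
    (P : B) (hΦP : Φ P ≠ 0)
    (hfree : IsFreeFamily ⇑φ (fun i => (Ai i : Set B)))
    (hcam : CyclicAntimonotone ⇑φ ⇑Φ
      (Algebra.adjoin ℂ (⋃ i, (Ai i : Set B)) : Set B)
      (NonUnitalAlgebra.adjoin ℂ ({P} ∪ ⋃ i, (Fi i : Set B)) : Set B)) :
    CFree ⇑φ (fun b => Φ (P * b) / Φ P)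
        (fun i => typeBSub (Ai i : Set B) (Fi i : Set B)) ↔
      BoolIndep (fun b => Φ (P * b) / Φ P) (fun i => (Fi i : Set B)) := by
  have hφ₀ (i : ι) (f : B) (hf : f ∈ Fi i) : φ f = 0 := by simpa using hφF i f hf 1 1
  refine ⟨fun hc => hc.boolIndep (fun i f hf => mem_typeBSub_of_mem (Ai i) hf) hφ₀,
    fun hB => ⟨hfree.typeBSub hφF, fun n idx b hne hb hb₀ => ?_⟩⟩
  have hAi (i : ι) : Ai i ≤ Algebra.adjoin ℂ (⋃ i, (Ai i : Set B)) :=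
    fun a ha => Algebra.subset_adjoin (Set.mem_iUnion_of_mem i ha)
  have hFi (i : ι) : Fi i ≤ NonUnitalAlgebra.adjoin ℂ ({P} ∪ ⋃ i, (Fi i : Set B)) :=
    fun f hf => NonUnitalAlgebra.subset_adjoin ℂ (.inr (Set.mem_iUnion_of_mem i hf))
  have hP : P ∈ NonUnitalAlgebra.adjoin ℂ ({P} ∪ ⋃ i, (Fi i : Set B)) :=
    NonUnitalAlgebra.subset_adjoin ℂ (.inl rfl)
  choose f hf hbf using fun k =>
    exists_compression hcam hφ1 (hAi _) (hFi _) (hφF _) (hb k) (hb₀ k)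
  calc Φ (P * (List.ofFn b).prod) / Φ P = Φ (P * (List.ofFn f).prod) / Φ P := by
        rw [map_mul_prod_eq_of_isCompression hcam hfree hφ1 hAi hFi hφF hne hb hb₀
          (fun k => hFi _ (hf k)) hbf hP]
    _ = ∏ k, Φ (P * f k) / Φ P := hB n idx f hne hf
    _ = ∏ k, Φ (P * b k) / Φ P := by
        simp only [(hbf _).map_mul_eq hcam hfree hAi hP]

theorem statement7
    {B : Type*} [Ring B] [Algebra ℂ B]
    (A : Subalgebra ℂ B) (F : Submodule ℂ B)
    (hFmulL : ∀ b : B, ∀ f ∈ F, b * f ∈ F)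
    (hFmulR : ∀ b : B, ∀ f ∈ F, f * b ∈ F)
    (hAF : ∀ x ∈ A, x ∈ F → x = 0)
    (hdec : ∀ x : B, ∃ a ∈ A, ∃ f ∈ F, x = a + f)
    (φ Φ : B →ₗ[ℂ] ℂ)
    (hφ1 : φ 1 = 1) (hφF : ∀ f ∈ F, φ f = 0)
    {ι : Type*}
    (Ai : ι → Subalgebra ℂ B) (hAi : ∀ i, Ai i ≤ A)
    (Fi : ι → NonUnitalSubalgebra ℂ B) (hFi : ∀ i, ∀ f ∈ Fi i, f ∈ F)
    (P : B) (hP : P ∈ F) (hΦP : Φ P ≠ 0)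
    (hfree : IsFreeFamily ⇑φ (fun i => (Ai i : Set B)))
    (hcam : CyclicAntimonotone ⇑φ ⇑Φ
      (Algebra.adjoin ℂ (⋃ i, (Ai i : Set B)) : Set B)
      (NonUnitalAlgebra.adjoin ℂ ({P} ∪ ⋃ i, (Fi i : Set B)) : Set B)) :
    CFree ⇑φ (fun b => Φ (P * b) / Φ P)
        (fun i => typeBSub (Ai i : Set B) (Fi i : Set B)) ↔
      BoolIndep (fun b => Φ (P * b) / Φ P) (fun i => (Fi i : Set B)) := by
  exact statement7_general φ Φ hφ1 Ai Fi
    (fun i f hf x y => hφF _ (hFmulR y _ (hFmulL x f (hFi i f hf)))) P hΦP hfree hcam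

end TypeBPrime
end
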